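/- Let V ∈ 𝒫^{s,p}_q(ℝⁿ), g ∈ W^{s,p}(ℝⁿ), K ∈ 𝒦_p, and let u ∈ Y^{s,p}_g(Ω)^+ be a weak supersolution of L^p_K u + V|u|^{p−2}u = 0 in Ω with exterior data g, with u ≥ 0 in B_R(x₀) ⊂ Ω. For a, b ∈ (0,1) set v(x) = ln( (a+b)/(u(x)+b) ). Then there is a constant C > 0 depending only on n, s, p, λ, Λ and Ω such that for every r ∈ (0, R/2): ⨍_{B_r(x₀)} | v(x) − v_{B_r(x₀)} |^p dx ≤ C·[ b^{−(p−1)}·(r/R)^{ps}·[𝒯_R(u_−;x₀)]^{p−1} + (1 + ‖V_+‖_{L^q(Ω)}) ], where v_B denotes the average of v over the ball B and u_− = max{−u,0}. In particular, v has bounded mean oscillation on B_R(x₀) with sup_{r∈(0,R/2)} ⨍_{B_r(x₀)}|v − v_{B_r(x₀)}| dx ≤ C'·[ b^{−(p−1)}·[𝒯_R(u_−;x₀)]^{p−1} + (1 + ‖V_+‖_{L^q(Ω)}) ]^{1/p} for a constant C' of the same type. -/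

import Mathlib

open MeasureTheory Real Set Metric Filter ENNReal

noncomputable section

abbrev Rn (n : ℕ) : Type := EuclideanSpace ℝ (Fin n)

namespace NLS

/-- The normalization constant `c_{n,p,s}`. -/
def cnps (n : ℕ) (p s : ℝ) : ℝ :=
  Real.Gamma (((n : ℝ) + p) / 2) * p * (1 - s) /
    (Real.pi ^ (((n : ℝ) - 1) / 2) * Real.Gamma ((p + 1) / 2))

/-- Membership in the kernel class `𝒦_p`. -/
def KernelClass (n : ℕ) (p s lam Lam : ℝ) (K : Rn n → ℝ) : Prop :=
  Measurable K ∧ (∀ y, K (-y) = K y) ∧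
    ∀ y : Rn n, y ≠ 0 →
      cnps n p s * lam * ‖y‖ ^ (-(n : ℝ) - p * s) ≤ K y ∧
        K y ≤ cnps n p s * Lam * ‖y‖ ^ (-(n : ℝ) - p * s)

/-- `H_p(t) = |t|^{p-2} t`. -/
def Hp (p t : ℝ) : ℝ := |t| ^ (p - 2) * t

/-- Positive part of a function. -/
def plusPart {n : ℕ} (f : Rn n → ℝ) : Rn n → ℝ := fun x => max (f x) 0

/-- Negative part of a function. -/
def minusPart {n : ℕ} (f : Rn n → ℝ) : Rn n → ℝ := fun x => max (-f x) 0

/-- The Gagliardo integrand `|u(x)-u(y)|^p |x-y|^{-n-ps}`. -/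
def gagliardoIntegrand (n : ℕ) (p s : ℝ) (u : Rn n → ℝ) (z : Rn n × Rn n) : ℝ :=
  |u z.1 - u z.2| ^ p * ‖z.1 - z.2‖ ^ (-(n : ℝ) - p * s)

/-- The Gagliardo seminorm `[u]_{W^{s,p}(U)}`. -/
def gagliardoSemi (n : ℕ) (p s : ℝ) (U : Set (Rn n)) (u : Rn n → ℝ) : ℝ :=
  (∫ z in U ×ˢ U, gagliardoIntegrand n p s u z) ^ (1 / p)

/-- The `L^p(U)` norm. -/
def lpNormOn (n : ℕ) (p : ℝ) (U : Set (Rn n)) (u : Rn n → ℝ) : ℝ :=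
  (∫ x in U, |u x| ^ p) ^ (1 / p)

/-- The `W^{s,p}(U)` norm. -/
def wspNorm (n : ℕ) (p s : ℝ) (U : Set (Rn n)) (u : Rn n → ℝ) : ℝ :=
  lpNormOn n p U u + gagliardoSemi n p s U u

/-- Membership in the fractional Sobolev space `W^{s,p}(U)`. -/
def MemWsp (n : ℕ) (p s : ℝ) (U : Set (Rn n)) (u : Rn n → ℝ) : Prop :=
  Measurable u ∧ IntegrableOn (fun x => |u x| ^ p) U ∧
    IntegrableOn (gagliardoIntegrand n p s u) (U ×ˢ U)

/-- `ℝ^{2n}_Ω = ℝ^{2n} ∖ (Ωᶜ × Ωᶜ)`. -/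
def R2n (n : ℕ) (Ω : Set (Rn n)) : Set (Rn n × Rn n) := {z | z.1 ∈ Ω ∨ z.2 ∈ Ω}

/-- Membership in `X^{s,p}(Ω)`. -/
def MemX (n : ℕ) (p s : ℝ) (Ω : Set (Rn n)) (u : Rn n → ℝ) : Prop :=
  Measurable u ∧ IntegrableOn (fun x => |u x| ^ p) Ω ∧
    IntegrableOn (gagliardoIntegrand n p s u) (R2n n Ω)

/-- Membership in `X^{s,p}_0(Ω)`. -/
def MemX0 (n : ℕ) (p s : ℝ) (Ω : Set (Rn n)) (u : Rn n → ℝ) : Prop :=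
  MemX n p s Ω u ∧ ∀ᵐ x ∂(volume : Measure (Rn n)), x ∉ Ω → u x = 0

/-- The norm `‖u‖_{X^{s,p}_0(Ω)}`. -/
def normX0 (n : ℕ) (p s : ℝ) (Ω : Set (Rn n)) (u : Rn n → ℝ) : ℝ :=
  (∫ z in R2n n Ω, gagliardoIntegrand n p s u z) ^ (1 / p)

/-- Open axis-parallel cube with center `c` and half side-length `h`. -/
def cube (n : ℕ) (c : Fin n → ℝ) (h : ℝ) : Set (Rn n) := {y | ∀ i, |y i - c i| < h}

/-- The `(A_1,A_1)` characteristic `[υ,ω]_{(A_1,A_1)}`. -/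
def A1const (n : ℕ) (υ ω : Rn n → ℝ) : ℝ≥0∞ :=
  ⨆ (c : Fin n → ℝ) (h : ℝ) (_ : 0 < h),
    ENNReal.ofReal (⨍ y in cube n c h, υ y) *
      essSup (fun y => (ENNReal.ofReal (ω y))⁻¹) (volume.restrict (cube n c h))

/-- `(υ,ω)` belongs to the `(A_1,A_1)`-Muckenhoupt class. -/
def A1pair (n : ℕ) (υ ω : Rn n → ℝ) : Prop := A1const n υ ω < ⊤

/-- `ω` belongs to the `A_1`-Muckenhoupt class. -/
def A1 (n : ℕ) (ω : Rn n → ℝ) : Prop := A1pair n ω ω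

/-- Membership in the potential class `𝒫^{s,p}_q(ℝⁿ)`. -/
structure IsPotential (n : ℕ) (p s q : ℝ) (V : Rn n → ℝ) : Prop where
  measurable : Measurable V
  minusPart_locInt : LocallyIntegrable (minusPart V) volume
  plusPart_locLq : LocallyIntegrable (fun x => plusPart V x ^ q) volume
  exists_b : ∃ b : Rn n → ℝ, Measurable b ∧ (∀ᵐ x ∂(volume : Measure (Rn n)), 0 < b x) ∧
    (∃ M : ℝ, ∀ x, |b x| ≤ M) ∧
    LocallyIntegrable (fun x => (plusPart V x / b x) ^ q) volume ∧
    ∀ i : ℕ, 0 < i →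
      A1pair n (minusPart V) (fun x => max (b x) (1 / (i : ℝ)) / b x * plusPart V x) ∧
      A1 n (fun x => max (b x) (1 / (i : ℝ)) / b x * plusPart V x)

/-- Membership in the weighted class `L^p_V(Ω)`. -/
def MemLpV (n : ℕ) (p : ℝ) (Ω : Set (Rn n)) (V u : Rn n → ℝ) : Prop :=
  IntegrableOn (fun x => |u x| ^ p * plusPart V x) Ω ∧
    IntegrableOn (fun x => |u x| ^ p * minusPart V x) Ω

/-- Membership in `Y^{s,p}(Ω)`. -/
def MemY (n : ℕ) (p s : ℝ) (Ω : Set (Rn n)) (V u : Rn n → ℝ) : Prop :=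
  MemX n p s Ω u ∧ MemLpV n p Ω V u

/-- Membership in `Y^{s,p}_0(Ω)`. -/
def MemY0 (n : ℕ) (p s : ℝ) (Ω : Set (Rn n)) (V u : Rn n → ℝ) : Prop :=
  MemX0 n p s Ω u ∧ MemLpV n p Ω V u

/-- Membership in `Y^{s,p}_g(Ω)^+`. -/
def MemYgPlus (n : ℕ) (p s : ℝ) (Ω : Set (Rn n)) (V g u : Rn n → ℝ) : Prop :=
  MemY n p s Ω V u ∧ MemY0 n p s Ω V (fun x => max (g x - u x) 0)

/-- Membership in `Y^{s,p}_g(Ω)^-`. -/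
def MemYgMinus (n : ℕ) (p s : ℝ) (Ω : Set (Rn n)) (V g u : Rn n → ℝ) : Prop :=
  MemY n p s Ω V u ∧ MemY0 n p s Ω V (fun x => max (u x - g x) 0)

/-- Membership in `Y^{s,p}_g(Ω)`. -/
def MemYg (n : ℕ) (p s : ℝ) (Ω : Set (Rn n)) (V g u : Rn n → ℝ) : Prop :=
  MemYgPlus n p s Ω V g u ∧ MemYgMinus n p s Ω V g u

/-- The pairing `⟨u,φ⟩_{H_p,K}`. -/
def pairing (n : ℕ) (p : ℝ) (K u φ : Rn n → ℝ) : ℝ :=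
  ∫ z : Rn n × Rn n, Hp p (u z.1 - u z.2) * (φ z.1 - φ z.2) * K (z.1 - z.2)

/-- `u` is a weak subsolution of `L^p_K u + V|u|^{p-2}u = 0` in `Ω` with exterior data `g`. -/
def WeakSubsolution (n : ℕ) (p s : ℝ) (Ω : Set (Rn n)) (K V g u : Rn n → ℝ) : Prop :=
  MemYgMinus n p s Ω V g u ∧
    ∀ φ : Rn n → ℝ, MemY0 n p s Ω V φ → (∀ x, 0 ≤ φ x) →
      pairing n p K u φ + ∫ x : Rn n, V x * (|u x| ^ (p - 2) * u x) * φ x ≤ 0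

/-- `u` is a weak supersolution of `L^p_K u + V|u|^{p-2}u = 0` in `Ω` with exterior data `g`. -/
def WeakSupersolution (n : ℕ) (p s : ℝ) (Ω : Set (Rn n)) (K V g u : Rn n → ℝ) : Prop :=
  MemYgPlus n p s Ω V g u ∧
    ∀ φ : Rn n → ℝ, MemY0 n p s Ω V φ → (∀ x, 0 ≤ φ x) →
      0 ≤ pairing n p K u φ + ∫ x : Rn n, V x * (|u x| ^ (p - 2) * u x) * φ x

/-- `u` is a weak solution of `L^p_K u + V|u|^{p-2}u = 0` in `Ω` with exterior data `g`. -/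
def WeakSolution (n : ℕ) (p s : ℝ) (Ω : Set (Rn n)) (K V g u : Rn n → ℝ) : Prop :=
  MemYg n p s Ω V g u ∧
    ∀ φ : Rn n → ℝ, MemY0 n p s Ω V φ →
      pairing n p K u φ + ∫ x : Rn n, V x * (|u x| ^ (p - 2) * u x) * φ x = 0

/-- The surface measure `|S^{n-1}|` of the unit sphere of `ℝⁿ`. -/
def sphereArea (n : ℕ) : ℝ := n * (volume (Metric.ball (0 : Rn n) 1)).toReal

/-- The nonlocal tail `𝒯_r(u;x₀)`. -/
def tail (n : ℕ) (p s : ℝ) (u : Rn n → ℝ) (x₀ : Rn n) (r : ℝ) : ℝ :=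
  (p * s / sphereArea n * r ^ (p * s) *
      ∫ y in (Metric.ball x₀ r)ᶜ, |u y| ^ (p - 1) * ‖y - x₀‖ ^ (-(n : ℝ) - p * s)) ^ (1 / (p - 1))

def supOn {n : ℕ} (u : Rn n → ℝ) (B : Set (Rn n)) : ℝ := sSup (u '' B)
def infOn {n : ℕ} (u : Rn n → ℝ) (B : Set (Rn n)) : ℝ := sInf (u '' B)
def oscOn {n : ℕ} (u : Rn n → ℝ) (B : Set (Rn n)) : ℝ := supOn u B - infOn u B

/-- The `L^q(Ω)` norm, used for `‖V₊‖_{L^q(Ω)}`. -/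
def lqNormOn (n : ℕ) (q : ℝ) (Ω : Set (Rn n)) (f : Rn n → ℝ) : ℝ :=
  (∫ x in Ω, |f x| ^ q) ^ (1 / q)

/-- The Hölder seminorm `[u]_{C^ε(B)}`. -/
def holderSemi {n : ℕ} (ε : ℝ) (B : Set (Rn n)) (u : Rn n → ℝ) : ℝ :=
  sSup ((fun z : Rn n × Rn n => |u z.1 - u z.2| / ‖z.1 - z.2‖ ^ ε) ''
    ((B ×ˢ B) ∩ {z | z.1 ≠ z.2}))

/-- The sup norm `‖u‖_{C(B)}`. -/
def cNorm {n : ℕ} (B : Set (Rn n)) (u : Rn n → ℝ) : ℝ := sSup ((fun x => |u x|) '' B)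

/-- The Hölder norm `‖u‖_{C^ε(B)}`. -/
def holderNorm {n : ℕ} (ε : ℝ) (B : Set (Rn n)) (u : Rn n → ℝ) : ℝ :=
  cNorm B u + holderSemi ε B u

/-- `u` is locally `ε`-Hölder continuous in `Ω`. -/
def LocallyHolder {n : ℕ} (ε : ℝ) (Ω : Set (Rn n)) (u : Rn n → ℝ) : Prop :=
  ∀ (x₀ : Rn n) (r : ℝ), closure (Metric.ball x₀ r) ⊆ Ω →
    ∃ L : ℝ, ∀ x ∈ Metric.ball x₀ r, ∀ y ∈ Metric.ball x₀ r, |u x - u y| ≤ L * ‖x - y‖ ^ ε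

end NLS

open NLS

lemma Hp_nonneg_eq {p t : ℝ} (hp : 1 < p) (ht : 0 ≤ t) : Hp p t = t ^ (p - 1) := by
  unfold Hp
  rcases ht.eq_or_lt with h | h
  · subst h; rw [Real.zero_rpow (by linarith)]; simp
  · rw [abs_of_pos h, show p - 1 = (p - 2) + 1 by ring, Real.rpow_add h, Real.rpow_one]

lemma Hp_neg (p t : ℝ) : Hp p (-t) = - Hp p t := by
  unfold Hp; rw [abs_neg]; ring

lemma Hp_nonpos {p t : ℝ} (ht : t ≤ 0) : Hp p t ≤ 0 := by
  unfold Hp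
  exact mul_nonpos_of_nonneg_of_nonpos (by positivity) ht

lemma Hp_abs {p t : ℝ} (hp : 1 < p) : |Hp p t| = |t| ^ (p - 1) := by
  rcases le_total 0 t with h | h
  · rw [Hp_nonneg_eq hp h, abs_of_nonneg h, abs_of_nonneg (by positivity)]
  · have : Hp p t = - Hp p (-t) := by rw [Hp_neg]; ring
    rw [this, Hp_nonneg_eq hp (by linarith), abs_neg, abs_of_nonpos h, abs_of_nonneg]
    exact Real.rpow_nonneg (by linarith) _

lemma core_log {p L : ℝ} (hp : 1 < p) (hL : 0 ≤ L) :
    (p - 1) * L ^ p ≤ (exp L - 1) ^ (p - 1) * (1 - exp (-((p - 1) * L))) := by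
  have key : ∀ m : ℝ, 0 ≤ m → m ≤ exp (m/2) - exp (-(m/2)) := by
    intro m hm
    have := Real.self_le_sinh_iff.2 (show 0 ≤ m/2 by linarith)
    rw [Real.sinh_eq] at this; linarith
  have h1 : L * exp (L/2) ≤ exp L - 1 := by
    have := mul_le_mul_of_nonneg_right (key L hL) (exp_pos (L/2)).le
    rw [sub_mul, ← exp_add, ← exp_add] at this
    simpa using this
  have h2 : (L * exp (L/2)) ^ (p-1) ≤ (exp L - 1) ^ (p-1) :=
    Real.rpow_le_rpow (by positivity) h1 (by linarith)
  rw [Real.mul_rpow hL (exp_pos _).le, ← Real.exp_mul] at h2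
  have h3 := key ((p-1)*L) (by nlinarith)
  have h4 : (0:ℝ) ≤ 1 - exp (-((p - 1) * L)) := by
    have : exp (-((p - 1) * L)) ≤ 1 := Real.exp_le_one_iff.2 (by nlinarith)
    linarith
  refine le_trans ?_ (mul_le_mul_of_nonneg_right h2 h4)
  have h5 : exp (L/2*(p-1)) * (1 - exp (-((p - 1) * L))) =
      exp ((p-1)*L/2) - exp (-((p-1)*L/2)) := by
    rw [mul_sub, ← exp_add]; ring_nf
  rw [mul_assoc, h5]
  have h6 : L ^ p = L ^ (p-1) * L := by
    rcases hL.eq_or_lt with h | h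
    · subst h; rw [Real.zero_rpow (by linarith)]; simp
    · rw [← Real.rpow_add_one h.ne']; ring_nf
  rw [h6]
  have : 0 ≤ L ^ (p-1) := by positivity
  nlinarith [mul_le_mul_of_nonneg_left h3 this]

lemma pt_log {p A B : ℝ} (hp : 1 < p) (hA : 0 < A) (hB : 0 < B) :
    Hp p (A - B) * (A ^ (1 - p) - B ^ (1 - p)) ≤ -((p - 1) * |log A - log B| ^ p) := by
  wlog hAB : B ≤ A generalizing A B
  · have := this hB hA (le_of_not_ge hAB)
    rw [abs_sub_comm, show A - B = -(B - A) by ring, Hp_neg]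
    linarith
  rw [Hp_nonneg_eq hp (by linarith)]
  set L := log A - log B with hLdef
  have hL : 0 ≤ L := by
    have := Real.log_le_log hB hAB; linarith
  have hAe : A = B * exp L := by
    rw [hLdef, exp_sub, exp_log hA, exp_log hB]; field_simp
  have h := core_log hp hL
  rw [abs_of_nonneg hL]
  have e1 : A - B = B * (exp L - 1) := by rw [hAe]; ring
  have h0 : 0 ≤ exp L - 1 := by have := Real.one_le_exp hL; linarith
  have e2 : A ^ (1-p) = B ^ (1-p) * exp (-((p - 1) * L)) := by
    rw [hAe, Real.mul_rpow hB.le (exp_pos _).le, ← Real.exp_mul]; ring_nf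
  rw [e1, e2, Real.mul_rpow hB.le h0]
  have e3 : B ^ (p-1) * B ^ (1-p) = 1 := by
    rw [← Real.rpow_add hB]; simp
  have : B ^ (p - 1) * (exp L - 1) ^ (p - 1) * (B ^ (1 - p) * exp (-((p - 1) * L)) - B ^ (1 - p))
    = -((B ^ (p-1) * B ^ (1-p)) * ((exp L - 1) ^ (p - 1) * (1 - exp (-((p - 1) * L))))) := by ring
  rw [this, e3]; linarith

lemma bern {p t : ℝ} (hp : 1 < p) (ht : 0 ≤ t) : 1 - t ^ p ≤ p * (1 - t) := by
  have := one_add_mul_self_le_rpow_one_add (s := t - 1) (by linarith) hp.le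
  rw [show 1 + (t - 1) = t by ring] at this
  linarith

def C1 (p : ℝ) : ℝ := p * (p / (p - 1)) ^ (p - 1)

lemma C1_pos {p : ℝ} (hp : 1 < p) : 0 < C1 p := by
  have : 0 < p - 1 := by linarith
  unfold C1; positivity

lemma pt_cut {p A B X Y : ℝ} (hp : 1 < p) (hA : 0 < A) (hB : 0 < B) (hX : 0 ≤ X) (hY : 0 ≤ Y) :
    Hp p (A - B) * (X ^ p * A ^ (1 - p) - Y ^ p * B ^ (1 - p)) ≤ C1 p * |X - Y| ^ p := by
  wlog hAB : B ≤ A generalizing A B X Y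
  · have := this hB hA hY hX (le_of_not_ge hAB)
    rw [abs_sub_comm, show A - B = -(B - A) by ring, Hp_neg]
    linarith
  have hC := C1_pos hp
  have hp1 : 0 < p - 1 := by linarith
  rw [Hp_nonneg_eq hp (by linarith)]
  have hAB1 : 0 ≤ (A - B) ^ (p-1) := Real.rpow_nonneg (by linarith) _
  by_cases hneg : X ^ p * A ^ (1 - p) - Y ^ p * B ^ (1 - p) ≤ 0
  · exact le_trans (mul_nonpos_of_nonneg_of_nonpos hAB1 hneg) (by positivity)
  push Not at hneg
  have hmono : A ^ (1-p) ≤ B ^ (1-p) := Real.rpow_le_rpow_of_nonpos hB hAB (by linarith)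
  have hA1 : 0 < A ^ (1-p) := by positivity
  have hYX : Y < X := by
    by_contra h
    push Not at h
    have : X ^ p ≤ Y ^ p := Real.rpow_le_rpow hX h (by linarith)
    have h0 : 0 ≤ X ^ p := by positivity
    nlinarith [mul_le_mul this hmono hA1.le (by positivity)]
  have hX0 : 0 < X := by linarith
  set σ := Y / X with hσ
  have hσ0 : 0 ≤ σ := by positivity
  have hσ1 : σ < 1 := by rw [hσ, div_lt_one hX0]; exact hYX
  have hYe : Y = X * σ := by rw [hσ]; field_simp
  set θ := B / A with hθ
  have hθ0 : 0 < θ := by positivity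
  have hθ1 : θ ≤ 1 := by rw [hθ, div_le_one hA]; exact hAB
  have hBe : B = A * θ := by rw [hθ]; field_simp
  -- rewrite
  have e1 : (A - B) ^ (p-1) = A ^ (p-1) * (1 - θ) ^ (p-1) := by
    rw [← Real.mul_rpow hA.le (by linarith)]; congr 1; rw [hBe]; ring
  have e2 : Y ^ p = X ^ p * σ ^ p := by rw [hYe, Real.mul_rpow hX hσ0]
  have e3 : B ^ (1-p) = A ^ (1-p) * θ ^ (1-p) := by rw [hBe, Real.mul_rpow hA.le hθ0.le]
  have e4 : A ^ (p-1) * A ^ (1-p) = 1 := by rw [← Real.rpow_add hA]; simp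
  have hXp : 0 < X ^ p := by positivity
  have hpos : 0 < 1 - σ ^ p * θ ^ (1-p) := by
    have : X ^ p * A ^ (1 - p) - Y ^ p * B ^ (1 - p) =
      (X ^ p * A ^ (1-p)) * (1 - σ ^ p * θ ^ (1-p)) := by rw [e2, e3]; ring
    rw [this] at hneg
    exact pos_of_mul_pos_right hneg (by positivity)
  have e5 : θ ^ (1-p) * θ ^ (p-1) = 1 := by rw [← Real.rpow_add hθ0]; simp
  have h1 : σ ^ p ≤ θ ^ (p-1) := by
    have h := mul_pos hpos (show 0 < θ ^ (p-1) by positivity)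
    have : (1 - σ ^ p * θ ^ (1-p)) * θ ^ (p-1) = θ ^ (p-1) - σ ^ p * (θ ^ (1-p) * θ ^ (p-1)) := by ring
    rw [this, e5] at h; linarith
  have h2 : σ ^ (p/(p-1)) ≤ θ := by
    have h := Real.rpow_le_rpow (by positivity) h1 (show 0 ≤ 1/(p-1) by positivity)
    rw [← Real.rpow_mul hσ0, ← Real.rpow_mul hθ0.le, mul_one_div_cancel hp1.ne', Real.rpow_one,
      mul_one_div] at h
    exact h
  have h3 : 1 - θ ≤ p/(p-1) * (1-σ) := by
    have := bern (p := p/(p-1)) (by rw [lt_div_iff₀ hp1]; linarith) hσ0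
    linarith
  have h4 : (1-θ) ^ (p-1) ≤ (p/(p-1)) ^ (p-1) * (1-σ) ^ (p-1) := by
    rw [← Real.mul_rpow (by positivity) (by linarith)]
    exact Real.rpow_le_rpow (by linarith) h3 hp1.le
  have h5 : 1 - σ ^ p * θ ^ (1-p) ≤ p * (1 - σ) := by
    have := bern hp hσ0
    have h6 : 1 ≤ θ ^ (1-p) := Real.one_le_rpow_of_pos_of_le_one_of_nonpos hθ0 hθ1 (by linarith)
    have h7 : 0 ≤ σ ^ p := by positivity
    nlinarith
  have e6 : |X - Y| ^ p = X ^ p * ((1-σ) ^ (p-1) * (1-σ)) := by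
    rw [← Real.rpow_add_one (by linarith), show p - 1 + 1 = p by ring, ← Real.mul_rpow hX (by linarith),
      abs_of_nonneg (by linarith)]
    congr 1; rw [hYe]; ring
  calc (A - B) ^ (p-1) * (X ^ p * A ^ (1 - p) - Y ^ p * B ^ (1 - p))
      = (A ^ (p-1) * A ^ (1-p)) * X ^ p * ((1-θ) ^ (p-1) * (1 - σ ^ p * θ ^ (1-p))) := by
        rw [e1, e2, e3]; ring
    _ = X ^ p * ((1-θ) ^ (p-1) * (1 - σ ^ p * θ ^ (1-p))) := by rw [e4, one_mul]
    _ ≤ X ^ p * (((p/(p-1)) ^ (p-1) * (1-σ) ^ (p-1)) * (p * (1 - σ))) := by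
        refine mul_le_mul_of_nonneg_left ?_ hXp.le
        refine mul_le_mul h4 h5 hpos.le ?_
        have : 0 ≤ 1 - σ := by linarith
        positivity
    _ = C1 p * |X - Y| ^ p := by rw [e6]; unfold C1; ring

lemma pt_far {p b X U W : ℝ} (hp : 1 < p) (hb : 0 < b) (hX : 0 ≤ X) (hU : 0 ≤ U) :
    Hp p (U - W) * (X ^ p * (U + b) ^ (1 - p)) ≤
      2 ^ (p-1) * X ^ p * (1 + 1 / b ^ (p - 1) * (max (-W) 0) ^ (p-1)) := by
  have hp1 : 0 < p - 1 := by linarith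
  set m := max (-W) 0 with hm
  have hm0 : 0 ≤ m := le_max_right _ _
  have hmW : -W ≤ m := le_max_left _ _
  have hXp : 0 ≤ X ^ p := by positivity
  have hR : 0 ≤ 2 ^ (p-1) * X ^ p * (1 + 1 / b ^ (p - 1) * m ^ (p-1)) := by positivity
  rcases le_total (U - W) 0 with h | h
  · exact le_trans (mul_nonpos_of_nonpos_of_nonneg (Hp_nonpos h) (by positivity)) hR
  rw [Hp_nonneg_eq hp h]
  have h1 : (U - W) ^ (p-1) ≤ 2 ^ (p-1) * (U ^ (p-1) + m ^ (p-1)) := by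
    calc (U - W) ^ (p-1) ≤ (2 * max U m) ^ (p-1) := by
          refine Real.rpow_le_rpow h ?_ hp1.le
          linarith [le_max_left U m, le_max_right U m]
      _ = 2 ^ (p-1) * (max U m) ^ (p-1) := Real.mul_rpow (by norm_num) (le_max_of_le_left hU)
      _ ≤ _ := by
          refine mul_le_mul_of_nonneg_left ?_ (by positivity)
          have : 0 ≤ U ^ (p-1) := by positivity
          have : 0 ≤ m ^ (p-1) := by positivity
          rcases max_choice U m with h | h <;> rw [h] <;> linarith
  have h2 : (U+b) ^ (1-p) * U ^ (p-1) ≤ 1 := by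
    rw [show 1 - p = -(p-1) by ring, Real.rpow_neg (by linarith), inv_mul_le_iff₀ (by positivity), mul_one]
    exact Real.rpow_le_rpow hU (by linarith) hp1.le
  have h3 : (U+b) ^ (1-p) ≤ 1 / b ^ (p-1) := by
    rw [show 1 - p = -(p-1) by ring, Real.rpow_neg (by linarith), one_div]
    exact inv_anti₀ (by positivity) (Real.rpow_le_rpow hb.le (by linarith) hp1.le)
  calc (U - W) ^ (p-1) * (X ^ p * (U + b) ^ (1 - p))
      ≤ 2 ^ (p-1) * (U ^ (p-1) + m ^ (p-1)) * (X ^ p * (U + b) ^ (1 - p)) :=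
        mul_le_mul_of_nonneg_right h1 (by positivity)
    _ = 2 ^ (p-1) * X ^ p * ((U+b) ^ (1-p) * U ^ (p-1) + (U+b) ^ (1-p) * m ^ (p-1)) := by ring
    _ ≤ _ := by
        refine mul_le_mul_of_nonneg_left ?_ (by positivity)
        exact add_le_add h2 (mul_le_mul_of_nonneg_right h3 (by positivity))

def cut {n : ℕ} (x₀ : Rn n) (r : ℝ) (x : Rn n) : ℝ := max 0 (min 1 (3 - 2 * (‖x - x₀‖ / r)))

lemma cut_nonneg {n : ℕ} (x₀ : Rn n) (r : ℝ) (x : Rn n) : 0 ≤ cut x₀ r x := le_max_left _ _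
lemma cut_le_one {n : ℕ} (x₀ : Rn n) (r : ℝ) (x : Rn n) : cut x₀ r x ≤ 1 :=
  max_le zero_le_one (min_le_left _ _)

lemma cut_eq_one {n : ℕ} {x₀ : Rn n} {r : ℝ} (hr : 0 < r) {x : Rn n} (hx : x ∈ ball x₀ r) :
    cut x₀ r x = 1 := by
  rw [mem_ball, dist_eq_norm] at hx
  have : ‖x - x₀‖ / r < 1 := by rw [div_lt_one hr]; exact hx
  unfold cut
  rw [min_eq_left (by linarith), max_eq_right zero_le_one]

lemma cut_eq_zero {n : ℕ} {x₀ : Rn n} {r : ℝ} (hr : 0 < r) {x : Rn n} (hx : x ∉ ball x₀ (3 / 2 * r)) :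
    cut x₀ r x = 0 := by
  rw [mem_ball, dist_eq_norm, not_lt] at hx
  have : 3 / 2 ≤ ‖x - x₀‖ / r := by rw [le_div_iff₀ hr]; exact hx
  unfold cut
  exact max_eq_left (le_trans (min_le_right _ _) (by linarith))

lemma cut_cont {n : ℕ} (x₀ : Rn n) (r : ℝ) : Continuous (cut x₀ r) := by
  unfold cut; fun_prop

lemma cut_lip {n : ℕ} {x₀ : Rn n} {r : ℝ} (hr : 0 < r) (x y : Rn n) :
    |cut x₀ r x - cut x₀ r y| ≤ min (2 * (‖x - y‖ / r)) 1 := by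
  refine le_min ?_ ?_
  · have h : |‖x - x₀‖ - ‖y - x₀‖| ≤ ‖x - y‖ := by
      have := abs_norm_sub_norm_le (x - x₀) (y - x₀)
      simpa using this
    unfold cut
    refine (abs_max_sub_max_le_max _ _ _ _).trans ?_
    refine max_le (by simp; positivity) ?_
    refine (abs_min_sub_min_le_max _ _ _ _).trans ?_
    refine max_le (by simp; positivity) ?_
    have : (3 - 2 * (‖x - x₀‖ / r)) - (3 - 2 * (‖y - x₀‖ / r)) = - (2 * ((‖x - x₀‖ - ‖y - x₀‖)/r)) := by
      ring
    rw [this, abs_neg, abs_mul, abs_div, abs_of_pos hr, abs_two]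
    gcongr
  · rw [abs_le]
    constructor <;> linarith [cut_nonneg x₀ r x, cut_nonneg x₀ r y, cut_le_one x₀ r x, cut_le_one x₀ r y]

def FJ (n : ℕ) (p s : ℝ) (z : Rn n) : ℝ := (min (2 * ‖z‖) 1) ^ p * ‖z‖ ^ (-(n : ℝ) - p * s)

lemma FJ_nonneg (n : ℕ) (p s : ℝ) (z : Rn n) : 0 ≤ FJ n p s z := by
  unfold FJ; positivity

lemma FJ_integrable (n : ℕ) (hn : 1 ≤ n) {p s : ℝ} (hp : 1 < p) (hs0 : 0 < s) (hs1 : s < 1) :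
    Integrable (FJ n p s) := by
  have : Nonempty (Fin n) := ⟨⟨0, hn⟩⟩
  have hps : 0 < p * s := by positivity
  have := (integrable_fun_norm_addHaar (E := Rn n) (volume : Measure (Rn n))
    (f := fun y : ℝ => (min (2 * y) 1) ^ p * y ^ (-(n : ℝ) - p * s))).1
  have H : IntegrableOn (fun y : ℝ => y ^ (Module.finrank ℝ (Rn n) - 1) •
      ((min (2 * y) 1) ^ p * y ^ (-(n : ℝ) - p * s))) (Ioi 0) := by
    have hm : Measurable (fun y : ℝ => y ^ (Module.finrank ℝ (Rn n) - 1) •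
      ((min (2 * y) 1) ^ p * y ^ (-(n : ℝ) - p * s))) := by fun_prop
    have hd : Module.finrank ℝ (Rn n) = n := by simp
    have hpow : ∀ y : ℝ, 0 < y → y ^ (n - 1) * y ^ (-(n : ℝ) - p * s) = y ^ (-1 - p * s) := by
      intro y hy
      rw [← Real.rpow_natCast, ← Real.rpow_add hy]
      congr 1
      push_cast [Nat.cast_sub hn]; ring
    rw [← Ioc_union_Ioi_eq_Ioi (zero_le_one' ℝ)]
    refine IntegrableOn.union ?_ ?_
    · have h1 : IntegrableOn (fun y : ℝ => 2 ^ p * y ^ (p - 1 - p * s)) (Ioc 0 1) := by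
        have := (intervalIntegral.intervalIntegrable_rpow' (a := 0) (b := 1) (r := p - 1 - p * s) (by nlinarith))
        rw [intervalIntegrable_iff_integrableOn_Ioc_of_le zero_le_one] at this
        exact this.const_mul _
      refine Integrable.mono' h1 hm.aestronglyMeasurable ?_
      filter_upwards [ae_restrict_mem measurableSet_Ioc] with y hy
      have hy0 := hy.1
      rw [hd, smul_eq_mul, Real.norm_of_nonneg (by positivity)]
      calc _ = (min (2*y) 1) ^ p * (y ^ (n - 1) * y ^ (-(n : ℝ) - p * s)) := by ring
        _ ≤ (2 * y) ^ p * (y ^ (n - 1) * y ^ (-(n : ℝ) - p * s)) := by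
          refine mul_le_mul_of_nonneg_right ?_ (by positivity)
          exact Real.rpow_le_rpow (by positivity) (min_le_left _ _) (by linarith)
        _ = 2 ^ p * y ^ (p - 1 - p * s) := by
          rw [hpow y hy0, Real.mul_rpow (by norm_num) hy0.le, mul_assoc, ← Real.rpow_add hy0]
          ring_nf
    · have h1 : IntegrableOn (fun y : ℝ => y ^ (-1 - p * s)) (Ioi 1) :=
        integrableOn_Ioi_rpow_of_lt (by linarith) zero_lt_one
      refine Integrable.mono' h1 hm.aestronglyMeasurable ?_
      filter_upwards [ae_restrict_mem measurableSet_Ioi] with y hy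
      have hy0 : 0 < y := lt_trans zero_lt_one hy
      rw [hd, smul_eq_mul, Real.norm_of_nonneg (by positivity)]
      calc _ = (min (2*y) 1) ^ p * (y ^ (n - 1) * y ^ (-(n : ℝ) - p * s)) := by ring
        _ ≤ 1 * (y ^ (n - 1) * y ^ (-(n : ℝ) - p * s)) := by
          refine mul_le_mul_of_nonneg_right ?_ (by positivity)
          exact Real.rpow_le_one (by positivity) (min_le_right _ _) (by linarith)
        _ = y ^ (-1 - p * s) := by
          rw [hpow y hy0, one_mul]
  exact integrable_fun_norm_addHaar (E := Rn n) (volume : Measure (Rn n)) |>.2 H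

def JJ (n : ℕ) (p s : ℝ) : ℝ := ∫ z, FJ n p s z

lemma JJ_nonneg (n : ℕ) (p s : ℝ) : 0 ≤ JJ n p s := integral_nonneg (FJ_nonneg n p s)

def FR (n : ℕ) (p s r : ℝ) (z : Rn n) : ℝ := (min (2 * (‖z‖ / r)) 1) ^ p * ‖z‖ ^ (-(n : ℝ) - p * s)

lemma FR_eq (n : ℕ) {p s r : ℝ} (hr : 0 < r) (z : Rn n) :
    FR n p s r z = r ^ (-(n : ℝ) - p * s) * FJ n p s (r⁻¹ • z) := by
  unfold FR FJ
  rw [norm_smul, Real.norm_of_nonneg (by positivity), Real.mul_rpow (by positivity) (by positivity),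
    Real.inv_rpow hr.le, show r⁻¹ * ‖z‖ = ‖z‖ / r by ring]
  have : r ^ (-(n : ℝ) - p * s) ≠ 0 := by positivity
  field_simp

lemma FR_nonneg (n : ℕ) {p s r : ℝ} (hr : 0 < r) (z : Rn n) : 0 ≤ FR n p s r z := by
  unfold FR; positivity

lemma FR_integrable (n : ℕ) (hn : 1 ≤ n) {p s r : ℝ} (hp : 1 < p) (hs0 : 0 < s) (hs1 : s < 1)
    (hr : 0 < r) : Integrable (FR n p s r) := by
  have : FR n p s r = fun z => r ^ (-(n : ℝ) - p * s) * FJ n p s (r⁻¹ • z) := funext (FR_eq n hr)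
  rw [this]
  exact ((FJ_integrable n hn hp hs0 hs1).comp_smul (inv_ne_zero hr.ne')).const_mul _

lemma FR_integral (n : ℕ) {p s r : ℝ} (hr : 0 < r) :
    ∫ z, FR n p s r z = r ^ (-(p * s)) * JJ n p s := by
  have : FR n p s r = fun z => r ^ (-(n : ℝ) - p * s) * FJ n p s (r⁻¹ • z) := funext (FR_eq n hr)
  rw [this, integral_const_mul, Measure.integral_comp_inv_smul_of_nonneg _ _ hr.le, smul_eq_mul]
  rw [← mul_assoc, finrank_euclideanSpace_fin, ← Real.rpow_natCast, ← Real.rpow_add hr]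
  unfold JJ; congr 2; ring

/-- product integrals -/
lemma prod_int1 {n : ℕ} {f g : Rn n → ℝ} (hf : Integrable f) (hg : Integrable g) :
    Integrable (fun z : Rn n × Rn n => f z.2 * g (z.1 - z.2)) := by
  have := hf.convolution_integrand (ContinuousLinearMap.mul ℝ ℝ) hg
  rw [Measure.volume_eq_prod]; simpa using this

lemma prod_int1_val {n : ℕ} {f g : Rn n → ℝ} (hf : Integrable f) (hg : Integrable g) :
    ∫ z : Rn n × Rn n, f z.2 * g (z.1 - z.2) = (∫ x, f x) * ∫ x, g x := by
  rw [Measure.volume_eq_prod, integral_prod_symm _ (by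
    rw [← Measure.volume_eq_prod]; exact prod_int1 hf hg)]
  simp only [integral_const_mul, integral_sub_right_eq_self, integral_mul_const]

lemma prod_int2 {n : ℕ} {f g : Rn n → ℝ} (hf : Integrable f) (hg : Integrable g)
    (hs : ∀ z, g (-z) = g z) :
    Integrable (fun z : Rn n × Rn n => f z.1 * g (z.1 - z.2)) := by
  have := (prod_int1 hf hg).swap
  refine this.congr (Eventually.of_forall fun z => ?_)
  simp only [Function.comp, Prod.fst_swap, Prod.snd_swap]
  rw [← hs, neg_sub]

lemma prod_int2_val {n : ℕ} {f g : Rn n → ℝ} (hf : Integrable f) (hg : Integrable g)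
    (hs : ∀ z, g (-z) = g z) :
    ∫ z : Rn n × Rn n, f z.1 * g (z.1 - z.2) = (∫ x, f x) * ∫ x, g x := by
  rw [← prod_int1_val hf hg, Measure.volume_eq_prod, ← integral_prod_swap]
  refine integral_congr_ae (Eventually.of_forall fun z => ?_)
  simp only [Prod.fst_swap, Prod.snd_swap]
  rw [← hs, neg_sub]

/-- gagliardo of the cutoff -/
lemma cut_gag {n : ℕ} (hn : 1 ≤ n) {p s r : ℝ} (hp : 1 < p) (hs0 : 0 < s) (hs1 : s < 1)
    (hr : 0 < r) (x₀ : Rn n) :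
    Integrable (gagliardoIntegrand n p s (cut x₀ r)) ∧
    ∫ z, gagliardoIntegrand n p s (cut x₀ r) z ≤
      2 * (volume.real (ball x₀ (3 / 2 * r)) * (r ^ (-(p * s)) * JJ n p s)) := by
  set χ : Rn n → ℝ := (ball x₀ (3 / 2 * r)).indicator (fun _ => 1) with hχ
  have hχi : Integrable χ := by
    rw [hχ, integrable_indicator_iff measurableSet_ball]
    exact integrableOn_const (measure_ball_lt_top.ne)
  have hχv : ∫ x, χ x = volume.real (ball x₀ (3 / 2 * r)) := by
    rw [hχ, integral_indicator measurableSet_ball]; simp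
  have hF := FR_integrable n hn hp hs0 hs1 hr
  have hFs : ∀ z, FR n p s r (-z) = FR n p s r z := by intro z; simp [FR]
  have hD := (prod_int1 hχi hF).add (prod_int2 hχi hF hFs)
  have hχ0 : ∀ x, 0 ≤ χ x := fun x => by rw [hχ]; exact indicator_nonneg (fun _ _ => zero_le_one) x
  have hbd : ∀ z : Rn n × Rn n, gagliardoIntegrand n p s (cut x₀ r) z ≤
      χ z.2 * FR n p s r (z.1 - z.2) + χ z.1 * FR n p s r (z.1 - z.2) := by
    intro z
    by_cases h : z.1 ∈ ball x₀ (3 / 2 * r) ∨ z.2 ∈ ball x₀ (3 / 2 * r)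
    · have h1 : 1 ≤ χ z.2 + χ z.1 := by
        rcases h with h | h
        · have : χ z.1 = 1 := by rw [hχ]; exact indicator_of_mem h _
          linarith [hχ0 z.2]
        · have : χ z.2 = 1 := by rw [hχ]; exact indicator_of_mem h _
          linarith [hχ0 z.1]
      have h2 : gagliardoIntegrand n p s (cut x₀ r) z ≤ FR n p s r (z.1 - z.2) := by
        unfold gagliardoIntegrand FR
        refine mul_le_mul_of_nonneg_right ?_ (by positivity)
        exact Real.rpow_le_rpow (abs_nonneg _) (cut_lip hr _ _) (by linarith)
      nlinarith [FR_nonneg n (p := p) (s := s) hr (z.1 - z.2)]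
    · push Not at h
      unfold gagliardoIntegrand
      rw [cut_eq_zero hr h.1, cut_eq_zero hr h.2, sub_self, abs_zero, Real.zero_rpow (by linarith), zero_mul]
      have := FR_nonneg n (p := p) (s := s) hr (z.1 - z.2)
      have := hχ0 z.1
      have := hχ0 z.2
      positivity
  have hg0 : ∀ z, 0 ≤ gagliardoIntegrand n p s (cut x₀ r) z := by
    intro z; unfold gagliardoIntegrand; positivity
  have hm : Measurable (gagliardoIntegrand n p s (cut x₀ r)) := by
    have := (cut_cont x₀ r).measurable
    unfold gagliardoIntegrand; fun_prop
  have hI : Integrable (gagliardoIntegrand n p s (cut x₀ r)) := by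
    refine hD.mono' hm.aestronglyMeasurable (Eventually.of_forall fun z => ?_)
    rw [Real.norm_of_nonneg (hg0 z)]
    exact hbd z
  refine ⟨hI, ?_⟩
  refine (integral_mono hI hD hbd).trans (le_of_eq ?_)
  simp only [Pi.add_apply]
  rw [integral_add (prod_int1 hχi hF) (prod_int2 hχi hF hFs), prod_int1_val hχi hF,
    prod_int2_val hχi hF hFs, hχv, FR_integral n hr]
  ring

lemma cnps_pos {n : ℕ} {p s : ℝ} (hp : 1 < p) (hs1 : s < 1) : 0 < cnps n p s := by
  unfold cnps
  have h1 : 0 < Real.Gamma (((n : ℝ) + p) / 2) := Real.Gamma_pos_of_pos (by positivity)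
  have h2 : 0 < Real.Gamma ((p + 1) / 2) := Real.Gamma_pos_of_pos (by positivity)
  have h3 : 0 < 1 - s := by linarith
  positivity

lemma add_rpow_le' {p x y : ℝ} (hp : 0 ≤ p) (hx : 0 ≤ x) (hy : 0 ≤ y) :
    (x + y) ^ p ≤ 2 ^ p * (x ^ p + y ^ p) := by
  calc (x + y) ^ p ≤ (2 * max x y) ^ p := by
        refine Real.rpow_le_rpow (by positivity) ?_ hp
        linarith [le_max_left x y, le_max_right x y]
    _ = 2 ^ p * (max x y) ^ p := Real.mul_rpow (by norm_num) (le_max_of_le_left hx)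
    _ ≤ _ := by
        refine mul_le_mul_of_nonneg_left ?_ (by positivity)
        have : 0 ≤ x ^ p := by positivity
        have : 0 ≤ y ^ p := by positivity
        rcases max_choice x y with h | h <;> rw [h] <;> linarith

lemma young' {p x y : ℝ} (hp : 1 < p) (hx : 0 ≤ x) (hy : 0 ≤ y) :
    x ^ (p - 1) * y ≤ x ^ p + y ^ p := by
  have e : ∀ m : ℝ, 0 ≤ m → m ^ (p-1) * m = m ^ p := by
    intro m hm
    rcases hm.eq_or_lt with h | h
    · subst h; rw [Real.zero_rpow (by linarith)]; simp; rw [Real.zero_rpow (by linarith)]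
    · rw [← Real.rpow_add_one h.ne']; ring_nf
  have h1 : 0 ≤ x ^ p := by positivity
  have h2 : 0 ≤ y ^ p := by positivity
  rcases le_total x y with h | h
  · have : x ^ (p-1) * y ≤ y ^ (p-1) * y :=
      mul_le_mul_of_nonneg_right (Real.rpow_le_rpow hx h (by linarith)) hy
    rw [e y hy] at this; linarith
  · have : x ^ (p-1) * y ≤ x ^ (p-1) * x :=
      mul_le_mul_of_nonneg_left h (by positivity)
    rw [e x hx] at this; linarith

lemma rpow_lip {p X Y : ℝ} (hp : 1 < p) (hX : 0 ≤ X) (hX1 : X ≤ 1) (hY : 0 ≤ Y) (hY1 : Y ≤ 1) :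
    |X ^ p - Y ^ p| ≤ p * |X - Y| := by
  wlog h : Y ≤ X generalizing X Y
  · rw [abs_sub_comm, abs_sub_comm X]; exact this hY hY1 hX hX1 (le_of_not_ge h)
  have : Y ^ p ≤ X ^ p := Real.rpow_le_rpow hY h (by linarith)
  rw [abs_of_nonneg (by linarith), abs_of_nonneg (by linarith)]
  rcases hX.eq_or_lt with h0 | h0
  · subst h0; have : Y = 0 := le_antisymm h hY
    subst this; simp
  have hb := bern hp (show 0 ≤ Y / X by positivity)
  have e : Y ^ p = X ^ p * (Y/X) ^ p := by
    rw [← Real.mul_rpow hX (by positivity)]; congr 1; field_simp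
  have e2 : X ^ p = X ^ (p-1) * X := by rw [← Real.rpow_add_one h0.ne']; ring_nf
  have h1 : X ^ (p-1) ≤ 1 := Real.rpow_le_one hX hX1 (by linarith)
  calc X ^ p - Y ^ p = X ^ p * (1 - (Y/X) ^ p) := by rw [e]; ring
    _ ≤ X ^ p * (p * (1 - Y/X)) := mul_le_mul_of_nonneg_left hb (by positivity)
    _ = X ^ (p-1) * (p * (X - Y)) := by rw [e2]; field_simp
    _ ≤ 1 * (p * (X - Y)) := by
      refine mul_le_mul_of_nonneg_right h1 ?_
      exact mul_nonneg (by linarith) (by linarith)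
    _ = _ := one_mul _

lemma neg_rpow_lip {p b A B : ℝ} (hp : 1 < p) (hb : 0 < b) (hA : b ≤ A) (hB : b ≤ B) :
    |A ^ (1-p) - B ^ (1-p)| ≤ (p-1) * b ^ (-p) * |A - B| := by
  wlog h : B ≤ A generalizing A B
  · rw [abs_sub_comm, abs_sub_comm A]; exact this hB hA (le_of_not_ge h)
  have hB0 : 0 < B := by linarith
  have hA0 : 0 < A := by linarith
  have hm : A ^ (1-p) ≤ B ^ (1-p) := Real.rpow_le_rpow_of_nonpos hB0 h (by linarith)
  rw [abs_sub_comm, abs_of_nonneg (by linarith), abs_of_nonneg (by linarith)]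
  have e : A ^ (1-p) = B ^ (1-p) * (A/B) ^ (1-p) := by
    rw [← Real.mul_rpow hB0.le (by positivity)]; congr 1; field_simp
  have e2 : B ^ (1-p) = B ^ (-p) * B := by rw [← Real.rpow_add_one hB0.ne']; ring_nf
  have h1 : 1 - (p-1) * (A/B - 1) ≤ (A/B) ^ (1-p) := by
    rw [Real.rpow_def_of_pos (by positivity)]
    have h2 := Real.add_one_le_exp (log (A/B) * (1-p))
    have h3 := Real.log_le_sub_one_of_pos (show 0 < A/B by positivity)
    nlinarith
  calc B ^ (1-p) - A ^ (1-p) = B ^ (1-p) * (1 - (A/B) ^ (1-p)) := by rw [e]; ring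
    _ ≤ B ^ (1-p) * ((p-1) * (A/B-1)) := mul_le_mul_of_nonneg_left (by linarith) (by positivity)
    _ = B ^ (-p) * ((p-1) * (A - B)) := by rw [e2]; field_simp
    _ ≤ b ^ (-p) * ((p-1) * (A - B)) := by
      refine mul_le_mul_of_nonneg_right ?_ (mul_nonneg (by linarith) (by linarith))
      exact Real.rpow_le_rpow_of_nonpos hb hB (by linarith)
    _ = _ := by ring

def tphi {n : ℕ} (p b r : ℝ) (x₀ : Rn n) (u : Rn n → ℝ) (x : Rn n) : ℝ :=
  cut x₀ r x ^ p * (max (u x) 0 + b) ^ (1 - p)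

lemma tphi_nonneg {n : ℕ} {p b r : ℝ} (hb : 0 < b) (x₀ : Rn n) (u : Rn n → ℝ) (x : Rn n) :
    0 ≤ tphi p b r x₀ u x := by
  have := cut_nonneg x₀ r x
  unfold tphi; positivity

lemma tphi_le {n : ℕ} {p b r : ℝ} (hp : 1 < p) (hb : 0 < b) (x₀ : Rn n) (u : Rn n → ℝ) (x : Rn n) :
    tphi p b r x₀ u x ≤ b ^ (1-p) := by
  have h0 := cut_nonneg x₀ r x
  have h1 : cut x₀ r x ^ p ≤ 1 := Real.rpow_le_one h0 (cut_le_one _ _ _) (by linarith)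
  have h2 : (max (u x) 0 + b) ^ (1 - p) ≤ b ^ (1-p) :=
    Real.rpow_le_rpow_of_nonpos hb (by linarith [le_max_right (u x) 0]) (by linarith)
  unfold tphi
  calc _ ≤ 1 * b ^ (1-p) := mul_le_mul h1 h2 (by positivity) zero_le_one
    _ = _ := one_mul _

lemma tphi_zero {n : ℕ} {p b r : ℝ} (hp : 1 < p) (hr : 0 < r) {x₀ : Rn n} (u : Rn n → ℝ) {x : Rn n}
    (hx : x ∉ ball x₀ (3 / 2 * r)) : tphi p b r x₀ u x = 0 := by
  unfold tphi; rw [cut_eq_zero hr hx, Real.zero_rpow (by linarith), zero_mul]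

lemma tphi_meas {n : ℕ} {p b r : ℝ} {x₀ : Rn n} {u : Rn n → ℝ} (hu : Measurable u) :
    Measurable (tphi p b r x₀ u) := by
  have := (cut_cont x₀ r).measurable
  unfold tphi; fun_prop

lemma tphi_lip {n : ℕ} {p b r : ℝ} (hp : 1 < p) (hb : 0 < b) (x₀ : Rn n) (u : Rn n → ℝ) (x y : Rn n) :
    |tphi p b r x₀ u x - tphi p b r x₀ u y| ≤
      p * b ^ (1-p) * |cut x₀ r x - cut x₀ r y| + (p-1) * b ^ (-p) * |u x - u y| := by
  have hX := cut_nonneg x₀ r x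
  have hY := cut_nonneg x₀ r y
  have hX1 := cut_le_one x₀ r x
  have hY1 := cut_le_one x₀ r y
  have h1 := rpow_lip hp hX hX1 hY hY1
  have hA : b ≤ max (u x) 0 + b := by linarith [le_max_right (u x) 0]
  have hB : b ≤ max (u y) 0 + b := by linarith [le_max_right (u y) 0]
  have h2 := neg_rpow_lip hp hb hA hB
  have h3 : |(max (u x) 0 + b) - (max (u y) 0 + b)| ≤ |u x - u y| := by
    have := abs_max_sub_max_le_abs (u x) (u y) 0
    simpa using this
  have hbp : 0 ≤ (p-1) * b ^ (-p) := mul_nonneg (by linarith) (by positivity)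
  have h4 : (max (u x) 0 + b) ^ (1 - p) ≤ b ^ (1-p) :=
    Real.rpow_le_rpow_of_nonpos hb hA (by linarith)
  have h5 : cut x₀ r y ^ p ≤ 1 := Real.rpow_le_one hY hY1 (by linarith)
  have h6 : 0 ≤ (max (u x) 0 + b) ^ (1 - p) := by positivity
  unfold tphi
  set X := cut x₀ r x
  set Y := cut x₀ r y
  set A := max (u x) 0 + b
  set B := max (u y) 0 + b
  calc |X ^ p * A ^ (1-p) - Y ^ p * B ^ (1-p)|
      = |(X ^ p - Y ^ p) * A ^ (1-p) + Y ^ p * (A ^ (1-p) - B ^ (1-p))| := by congr 1; ring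
    _ ≤ |X ^ p - Y ^ p| * A ^ (1-p) + Y ^ p * |A ^ (1-p) - B ^ (1-p)| := by
        refine (abs_add_le _ _).trans (le_of_eq ?_)
        rw [abs_mul, abs_mul, abs_of_nonneg h6, abs_of_nonneg (show 0 ≤ Y ^ p by positivity)]
    _ ≤ (p * |X - Y|) * b ^ (1-p) + 1 * ((p-1) * b ^ (-p) * |A - B|) := by
        refine add_le_add (mul_le_mul h1 h4 h6 (by positivity)) (mul_le_mul h5 h2 (abs_nonneg _) zero_le_one)
    _ ≤ _ := by nlinarith [mul_le_mul_of_nonneg_left h3 hbp]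

lemma R2n_meas {n : ℕ} {Ω : Set (Rn n)} (hΩ : MeasurableSet Ω) : MeasurableSet (R2n n Ω) := by
  have : R2n n Ω = (Prod.fst ⁻¹' Ω) ∪ (Prod.snd ⁻¹' Ω) := rfl
  rw [this]
  exact (measurable_fst hΩ).union (measurable_snd hΩ)

lemma gag_nonneg {n : ℕ} {p s : ℝ} (u : Rn n → ℝ) (z) : 0 ≤ gagliardoIntegrand n p s u z := by
  unfold gagliardoIntegrand; positivity

lemma gag_meas {n : ℕ} {p s : ℝ} {u : Rn n → ℝ} (hu : Measurable u) :
    Measurable (gagliardoIntegrand n p s u) := by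
  unfold gagliardoIntegrand; fun_prop

lemma tphi_gag {n : ℕ} (hn : 1 ≤ n) {p s b r : ℝ} (hp : 1 < p) (hs0 : 0 < s) (hs1 : s < 1)
    (hb : 0 < b) (hr : 0 < r) (x₀ : Rn n) {u : Rn n → ℝ} {Ω : Set (Rn n)} (hΩ : IsOpen Ω)
    (hu : MemX n p s Ω u) :
    IntegrableOn (gagliardoIntegrand n p s (tphi p b r x₀ u)) (R2n n Ω) := by
  have h1 := ((cut_gag hn hp hs0 hs1 hr x₀).1).integrableOn (s := R2n n Ω)
  have h2 := hu.2.2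
  set α := p * b ^ (1-p) with hα
  set β := (p-1) * b ^ (-p) with hβ
  have hα0 : 0 ≤ α := by positivity
  have hβ0 : 0 ≤ β := mul_nonneg (by linarith) (by positivity)
  have h3 := ((h1.const_mul (2 ^ p * α ^ p)).add (h2.const_mul (2 ^ p * β ^ p)))
  refine Integrable.mono' h3 (gag_meas (tphi_meas hu.1)).aestronglyMeasurable
    (Eventually.of_forall fun z => ?_)
  rw [Real.norm_of_nonneg (gag_nonneg _ _)]
  simp only [Pi.add_apply]
  unfold gagliardoIntegrand
  have := tphi_lip hp hb x₀ u (r := r) z.1 z.2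
  have h4 : |tphi p b r x₀ u z.1 - tphi p b r x₀ u z.2| ^ p ≤
      2 ^ p * ((α * |cut x₀ r z.1 - cut x₀ r z.2|) ^ p + (β * |u z.1 - u z.2|) ^ p) := by
    refine (Real.rpow_le_rpow (abs_nonneg _) this (by linarith)).trans ?_
    exact add_rpow_le' (by linarith) (by positivity) (by positivity)
  rw [Real.mul_rpow hα0 (abs_nonneg _), Real.mul_rpow hβ0 (abs_nonneg _)] at h4
  refine (mul_le_mul_of_nonneg_right h4 (by positivity)).trans (le_of_eq ?_)
  ring

lemma plus_int {n : ℕ} {p s q : ℝ} {V : Rn n → ℝ} (hV : IsPotential n p s q V) (hq : 1 < q)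
    {Ω : Set (Rn n)} (hΩb : Bornology.IsBounded Ω) : IntegrableOn (plusPart V) Ω := by
  have hm : Measurable (plusPart V) := by
    have := hV.measurable
    unfold plusPart; fun_prop
  have h1 : IntegrableOn (fun x => plusPart V x ^ q) Ω :=
    (hV.plusPart_locLq.integrableOn_isCompact hΩb.isCompact_closure).mono_set subset_closure
  have h2 : IntegrableOn (fun _ : Rn n => (1:ℝ)) Ω := integrableOn_const hΩb.measure_lt_top.ne
  refine Integrable.mono' (h2.add h1) hm.aestronglyMeasurable (Eventually.of_forall fun x => ?_)
  have h0 : 0 ≤ plusPart V x := le_max_right _ _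
  rw [Real.norm_of_nonneg h0]
  simp only [Pi.add_apply]
  have : 0 ≤ plusPart V x ^ q := by positivity
  rcases le_total (plusPart V x) 1 with h | h
  · linarith
  · have := Real.self_le_rpow_of_one_le h hq.le
    linarith

lemma minus_int {n : ℕ} {p s q : ℝ} {V : Rn n → ℝ} (hV : IsPotential n p s q V)
    {Ω : Set (Rn n)} (hΩb : Bornology.IsBounded Ω) : IntegrableOn (minusPart V) Ω :=
  (hV.minusPart_locInt.integrableOn_isCompact hΩb.isCompact_closure).mono_set subset_closure

lemma tphi_mem {n : ℕ} (hn : 1 ≤ n) {p s q b r : ℝ} (hp : 1 < p) (hs0 : 0 < s) (hs1 : s < 1)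
    (hq : 1 < q) (hb : 0 < b) (hr : 0 < r) (x₀ : Rn n) {u V : Rn n → ℝ} {Ω : Set (Rn n)}
    (hΩ : IsOpen Ω) (hΩb : Bornology.IsBounded Ω)
    (hu : MemX n p s Ω u) (hV : IsPotential n p s q V) (hsub : ball x₀ (3 / 2 * r) ⊆ Ω) :
    MemY0 n p s Ω V (tphi p b r x₀ u) := by
  have hm : Measurable (tphi p b r x₀ u) := tphi_meas hu.1
  have hbd : ∀ x, |tphi p b r x₀ u x| ^ p ≤ (b ^ (1-p)) ^ p := fun x => by
    rw [abs_of_nonneg (tphi_nonneg hb _ _ _)]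
    exact Real.rpow_le_rpow (tphi_nonneg hb _ _ _) (tphi_le hp hb _ _ _) (by linarith)
  have key : ∀ W : Rn n → ℝ, (∀ x, 0 ≤ W x) → Measurable W → IntegrableOn W Ω →
      IntegrableOn (fun x => |tphi p b r x₀ u x| ^ p * W x) Ω := by
    intro W hW0 hWm hW
    refine Integrable.mono' (hW.const_mul ((b ^ (1-p)) ^ p)) (by fun_prop)
      (Eventually.of_forall fun x => ?_)
    rw [Real.norm_of_nonneg (mul_nonneg (by positivity) (hW0 x))]
    exact mul_le_mul_of_nonneg_right (hbd x) (hW0 x)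
  have hVm := hV.measurable
  refine ⟨⟨⟨hm, ?_, tphi_gag hn hp hs0 hs1 hb hr x₀ hΩ hu⟩, ?_⟩, ?_, ?_⟩
  · have := key (fun _ => 1) (fun _ => zero_le_one) measurable_const
      (integrableOn_const hΩb.measure_lt_top.ne)
    simpa using this
  · exact Eventually.of_forall fun x hx => tphi_zero hp hr u (fun h => hx (hsub h))
  · exact key _ (fun x => le_max_right _ _) (by unfold plusPart; fun_prop) (plus_int hV hq hΩb)
  · exact key _ (fun x => le_max_right _ _) (by unfold minusPart; fun_prop) (minus_int hV hΩb)

lemma K_bd {n : ℕ} {p s lam Lam : ℝ} (hp : 1 < p) (hs1 : s < 1) (hlam : 0 < lam) {K : Rn n → ℝ}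
    (hK : KernelClass n p s lam Lam K) {y : Rn n} (hy : y ≠ 0) :
    0 ≤ K y ∧ |K y| ≤ cnps n p s * Lam * ‖y‖ ^ (-(n : ℝ) - p * s) := by
  have h := hK.2.2 y hy
  have hc : 0 < cnps n p s := cnps_pos hp hs1
  have h0 : 0 ≤ K y := le_trans (by positivity) h.1
  exact ⟨h0, by rw [abs_of_nonneg h0]; exact h.2⟩

lemma pair_int {n : ℕ} {p s lam Lam : ℝ} (hp : 1 < p) (hs1 : s < 1)
    (hlam : 0 < lam) (hlL : lam ≤ Lam) {u φ K : Rn n → ℝ} {Ω : Set (Rn n)} (hΩ : IsOpen Ω)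
    (hK : KernelClass n p s lam Lam K)
    (hu : MemX n p s Ω u) (hφ : MemX n p s Ω φ) (hφ0 : ∀ x, x ∉ Ω → φ x = 0) :
    Integrable (fun z : Rn n × Rn n => Hp p (u z.1 - u z.2) * (φ z.1 - φ z.2) * K (z.1 - z.2)) := by
  have hc : 0 < cnps n p s := cnps_pos hp hs1
  have hum := hu.1
  have hφm := hφ.1
  have hKm := hK.1
  have hLam : 0 < Lam := by linarith
  rw [← integrableOn_iff_integrable_of_support_subset (s := R2n n Ω)]
  · refine Integrable.mono' ((hu.2.2.add hφ.2.2).const_mul (cnps n p s * Lam)) ?_ ?_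
    · refine Measurable.aestronglyMeasurable ?_
      unfold Hp; fun_prop
    · refine Eventually.of_forall fun z => ?_
      simp only [Pi.add_apply]
      by_cases hz : z.1 = z.2
      · rw [hz]; simp only [sub_self, mul_zero, zero_mul, norm_zero]
        have := gag_nonneg (p := p) (s := s) u z
        have := gag_nonneg (p := p) (s := s) φ z
        positivity
      · have hK' := (K_bd hp hs1 hlam hK (sub_ne_zero.2 hz)).2
        rw [Real.norm_eq_abs, abs_mul, abs_mul, Hp_abs hp]
        have hy := young' hp (abs_nonneg (u z.1 - u z.2)) (abs_nonneg (φ z.1 - φ z.2))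
        refine (mul_le_mul hy hK' (abs_nonneg _) (by positivity)).trans (le_of_eq ?_)
        unfold gagliardoIntegrand; ring
  · intro z hz
    by_contra h
    apply hz
    have h' : z.1 ∉ Ω ∧ z.2 ∉ Ω := by
      simpa [R2n] using h
    simp [hφ0 _ h'.1, hφ0 _ h'.2]

def tint {n : ℕ} (p s : ℝ) (u : Rn n → ℝ) (x₀ : Rn n) (y : Rn n) : ℝ :=
  |minusPart u y| ^ (p - 1) * ‖y - x₀‖ ^ (-(n : ℝ) - p * s)

lemma tint_nonneg {n : ℕ} {p s : ℝ} {u : Rn n → ℝ} {x₀ y : Rn n} : 0 ≤ tint p s u x₀ y := by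
  unfold tint; positivity

lemma norm_comp {n : ℕ} {p s c : ℝ} (hp : 1 < p) (hs0 : 0 < s) {x y : Rn n} (hc : 0 < c)
    (hx : 0 < ‖x‖) (h : ‖x‖ ≤ c * ‖y‖) :
    ‖y‖ ^ (-(n : ℝ) - p * s) ≤ c ^ ((n : ℝ) + p * s) * ‖x‖ ^ (-(n : ℝ) - p * s) := by
  have hps : 0 < p * s := by positivity
  have hy : 0 < ‖y‖ := by
    by_contra h'
    have : ‖y‖ = 0 := le_antisymm (not_lt.1 h') (norm_nonneg _)
    rw [this] at h; linarith
  have := Real.rpow_le_rpow hx.le h (show 0 ≤ (n : ℝ) + p * s by positivity)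
  rw [Real.mul_rpow hc.le hy.le] at this
  rw [show -(n : ℝ) - p * s = -((n : ℝ) + p * s) by ring, Real.rpow_neg hx.le, Real.rpow_neg hy.le]
  rw [← div_eq_mul_inv, le_div_iff₀ (by positivity), inv_mul_le_iff₀ (by positivity)]
  linarith

lemma tint_int {n : ℕ} (hn : 1 ≤ n) {p s R : ℝ} (hp : 1 < p) (hs0 : 0 < s) (hs1 : s < 1)
    (hR : 0 < R) {x₀ : Rn n} {u : Rn n → ℝ} {Ω : Set (Rn n)}
    (hu : MemX n p s Ω u) (hsub : ball x₀ R ⊆ Ω) :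
    IntegrableOn (tint p s u x₀) (ball x₀ R)ᶜ := by
  have h1 : IntegrableOn (gagliardoIntegrand n p s u) (ball x₀ R ×ˢ univ) :=
    hu.2.2.mono_set (fun z hz => Or.inl (hsub hz.1))
  unfold IntegrableOn at h1
  rw [Measure.volume_eq_prod, ← Measure.prod_restrict, Measure.restrict_univ] at h1
  have h2 := h1.prod_right_ae
  have hpos : volume (ball x₀ R) ≠ 0 := (measure_ball_pos _ _ hR).ne'
  obtain ⟨x, hxB, hx⟩ : ∃ x ∈ ball x₀ R, Integrable (fun y => gagliardoIntegrand n p s u (x, y)) := by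
    have h3 := h2.and (ae_restrict_mem measurableSet_ball)
    have : NeZero (volume.restrict (ball x₀ R)) := ⟨by rwa [Ne, Measure.restrict_eq_zero]⟩
    obtain ⟨x, hx⟩ := h3.exists
    exact ⟨x, hx.2, hx.1⟩
  have h4 : Integrable (fun y => FR n p s R (y - x₀)) :=
    (FR_integrable n hn hp hs0 hs1 hR).comp_sub_right x₀
  have h5 := ((h4.const_mul (1 + 2 ^ p * |u x| ^ p)).add
    (hx.const_mul (2 ^ p * 2 ^ ((n : ℝ) + p * s)))).integrableOn (s := (ball x₀ R)ᶜ)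
  have hum := hu.1
  refine Integrable.mono' h5 ?_ ?_
  · refine Measurable.aestronglyMeasurable ?_
    unfold tint minusPart; fun_prop
  filter_upwards [ae_restrict_mem measurableSet_ball.compl] with y hy
  rw [Real.norm_of_nonneg tint_nonneg]
  simp only [Pi.add_apply]
  have hy' : R ≤ ‖y - x₀‖ := by
    rw [mem_compl_iff, mem_ball, dist_eq_norm, not_lt] at hy; exact hy
  have hx' : ‖x - x₀‖ < R := by rw [mem_ball, dist_eq_norm] at hxB; exact hxB
  have hxy : 0 < ‖x - y‖ := by
    rw [norm_pos_iff, sub_ne_zero]; rintro rfl; linarith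
  have hk : ‖y - x₀‖ ^ (-(n : ℝ) - p * s) ≤ 2 ^ ((n : ℝ) + p * s) * ‖x - y‖ ^ (-(n : ℝ) - p * s) := by
    refine norm_comp hp hs0 (by norm_num) hxy ?_
    have : x - y = (x - x₀) - (y - x₀) := by abel
    rw [this]
    refine (norm_sub_le _ _).trans ?_
    linarith
  have hF : FR n p s R (y - x₀) = ‖y - x₀‖ ^ (-(n : ℝ) - p * s) := by
    unfold FR
    rw [min_eq_right, Real.one_rpow, one_mul]
    have : 1 ≤ ‖y - x₀‖ / R := by rw [le_div_iff₀ hR]; linarith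
    linarith
  have hm : |minusPart u y| ^ (p-1) ≤ 1 + |u y| ^ p := by
    have h6 : |minusPart u y| ≤ |u y| := by
      unfold minusPart
      rw [abs_of_nonneg (le_max_right _ _)]
      exact max_le (neg_le_abs _) (abs_nonneg _)
    refine (Real.rpow_le_rpow (abs_nonneg _) h6 (by linarith)).trans ?_
    have := young' hp (abs_nonneg (u y)) zero_le_one
    rw [Real.one_rpow] at this; linarith
  have hu2 : |u y| ^ p ≤ 2 ^ p * (|u x| ^ p + |u x - u y| ^ p) := by
    refine le_trans (Real.rpow_le_rpow (abs_nonneg _) ?_ (by linarith))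
      (add_rpow_le' (by linarith) (abs_nonneg _) (abs_nonneg _))
    have := abs_sub_abs_le_abs_sub (u y) (u x)
    rw [abs_sub_comm (u y)] at this; linarith
  rw [hF]
  unfold tint gagliardoIntegrand
  simp only
  set k := ‖y - x₀‖ ^ (-(n : ℝ) - p * s)
  have hk0 : 0 ≤ k := by positivity
  calc |minusPart u y| ^ (p-1) * k ≤ (1 + 2 ^ p * (|u x| ^ p + |u x - u y| ^ p)) * k :=
        mul_le_mul_of_nonneg_right (by linarith) hk0
    _ = (1 + 2 ^ p * |u x| ^ p) * k + 2 ^ p * |u x - u y| ^ p * k := by ring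
    _ ≤ (1 + 2 ^ p * |u x| ^ p) * k + 2 ^ p * |u x - u y| ^ p *
        (2 ^ ((n : ℝ) + p * s) * ‖x - y‖ ^ (-(n : ℝ) - p * s)) := by
        gcongr
    _ = _ := by ring

/-- Poincare -/
lemma poinc {α : Type*} [MeasurableSpace α] (μ : Measure α) [IsFiniteMeasure μ] [NeZero μ]
    {p : ℝ} (hp : 1 < p) {w : α → ℝ} (hw : Integrable w μ) (hwm : Measurable w)
    (hF : Integrable (fun z : α × α => |w z.1 - w z.2| ^ p) (μ.prod μ)) :
    Integrable (fun x => |w x - ⨍ y, w y ∂μ| ^ p) μ ∧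
    ⨍ x, |w x - ⨍ y, w y ∂μ| ^ p ∂μ ≤ (μ.real univ)⁻¹ * ((μ.real univ)⁻¹ *
      ∫ z, |w z.1 - w z.2| ^ p ∂(μ.prod μ)) := by
  have hμ : 0 < μ.real univ := by
    rw [measureReal_def]; exact ENNReal.toReal_pos (NeZero.ne _) (measure_ne_top _ _)
  have hpt : ∀ᵐ x ∂μ, |w x - ⨍ y, w y ∂μ| ^ p ≤ (μ.real univ)⁻¹ * ∫ y, |w x - w y| ^ p ∂μ := by
    filter_upwards [hF.prod_right_ae] with x hx
    have hi : Integrable (fun y => w x - w y) μ := (integrable_const _).sub hw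
    have e : w x - ⨍ y, w y ∂μ = ⨍ y, (w x - w y) ∂μ := by
      rw [average_eq, average_eq, integral_sub (integrable_const _) hw, integral_const]
      simp only [smul_eq_mul]
      field_simp
    have h1 : |⨍ y, (w x - w y) ∂μ| ≤ ⨍ y, |w x - w y| ∂μ := by
      rw [average_eq, average_eq, smul_eq_mul, smul_eq_mul, abs_mul, abs_of_pos (by positivity)]
      exact mul_le_mul_of_nonneg_left (abs_integral_le_integral_abs) (by positivity)
    rw [e]
    refine (Real.rpow_le_rpow (abs_nonneg _) h1 (by linarith)).trans ?_
    have h2 := (convexOn_rpow hp.le).map_average_le (μ := μ) (f := fun y => |w x - w y|)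
      (Real.continuous_rpow_const (by linarith)).continuousOn isClosed_Ici
      (Eventually.of_forall fun y => mem_Ici.2 (abs_nonneg _)) hi.abs hx
    refine h2.trans (le_of_eq ?_)
    rw [average_eq, smul_eq_mul]
  have hg := hF.integral_prod_left.const_mul ((μ.real univ)⁻¹)
  have hi : Integrable (fun x => |w x - ⨍ y, w y ∂μ| ^ p) μ := by
    refine hg.mono' (Measurable.aestronglyMeasurable (by fun_prop)) ?_
    filter_upwards [hpt] with x hx
    rw [Real.norm_of_nonneg (by positivity)]; exact hx
  refine ⟨hi, ?_⟩
  rw [average_eq, smul_eq_mul]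
  refine mul_le_mul_of_nonneg_left ?_ (by positivity)
  refine (integral_mono_ae hi hg hpt).trans (le_of_eq ?_)
  rw [integral_const_mul, integral_prod _ hF]

lemma jens {α : Type*} [MeasurableSpace α] (μ : Measure α) [IsFiniteMeasure μ] [NeZero μ]
    {p : ℝ} (hp : 1 < p) {f : α → ℝ} (hf : Integrable f μ) (hfp : Integrable (fun x => |f x| ^ p) μ) :
    ⨍ x, |f x| ∂μ ≤ (⨍ x, |f x| ^ p ∂μ) ^ (1 / p) := by
  have h2 := (convexOn_rpow hp.le).map_average_le (μ := μ) (f := fun y => |f y|)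
      (Real.continuous_rpow_const (by linarith)).continuousOn isClosed_Ici
      (Eventually.of_forall fun y => mem_Ici.2 (abs_nonneg _)) hf.abs hfp
  have h0 : 0 ≤ ⨍ x, |f x| ∂μ := by
    rw [average_eq, smul_eq_mul]
    exact mul_nonneg (by positivity) (integral_nonneg fun x => abs_nonneg _)
  have h3 := Real.rpow_le_rpow (by positivity) h2 (show 0 ≤ 1 / p by positivity)
  rwa [← Real.rpow_mul h0, mul_one_div_cancel (by linarith), Real.rpow_one] at h3

lemma pot_bd {n : ℕ} {p s q b r R : ℝ} (hp : 1 < p) (hq : 1 < q) (hb : 0 < b) (hr : 0 < r)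
    (hrR : r < R / 2) {x₀ : Rn n} {u V : Rn n → ℝ} (hum : Measurable u)
    (hV : IsPotential n p s q V) (hu0 : ∀ x ∈ ball x₀ R, 0 ≤ u x) :
    ∫ x : Rn n, V x * (|u x| ^ (p - 2) * u x) * tphi p b r x₀ u x ≤
      ∫ x in ball x₀ (3 / 2 * r), plusPart V x := by
  have hVm := hV.measurable
  have hφm : Measurable (tphi p b r x₀ u) := tphi_meas hum
  rw [← setIntegral_eq_integral_of_forall_compl_eq_zero (s := ball x₀ (3 / 2 * r))
    (fun x hx => by rw [tphi_zero hp hr u hx, mul_zero])]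
  have hVp := plus_int hV hq (isBounded_ball (x := x₀) (r := 3 / 2 * r))
  have hVn := minus_int hV (isBounded_ball (x := x₀) (r := 3 / 2 * r))
  have hpt : ∀ x ∈ ball x₀ (3 / 2 * r), 0 ≤ (|u x| ^ (p - 2) * u x) * tphi p b r x₀ u x ∧
      (|u x| ^ (p - 2) * u x) * tphi p b r x₀ u x ≤ 1 := by
    intro x hx
    have hux := hu0 x (ball_subset_ball (by linarith) hx)
    have e := Hp_nonneg_eq hp hux
    unfold Hp at e
    rw [e]
    refine ⟨mul_nonneg (by positivity) (tphi_nonneg hb _ _ _), ?_⟩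
    unfold tphi
    rw [max_eq_left hux]
    have h1 : cut x₀ r x ^ p ≤ 1 := Real.rpow_le_one (cut_nonneg _ _ _) (cut_le_one _ _ _) (by linarith)
    have h2 : u x ^ (p-1) * (u x+b) ^ (1-p) ≤ 1 := by
      rw [show 1 - p = -(p-1) by ring, Real.rpow_neg (by linarith), mul_inv_le_iff₀ (by positivity), one_mul]
      exact Real.rpow_le_rpow hux (by linarith) (by linarith)
    have h3 : 0 ≤ cut x₀ r x ^ p := Real.rpow_nonneg (cut_nonneg _ _ _) _
    have h4 : 0 ≤ u x ^ (p-1) * (u x+b) ^ (1-p) := by positivity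
    calc _ = cut x₀ r x ^ p * (u x ^ (p-1) * (u x+b) ^ (1-p)) := by ring
      _ ≤ 1 * 1 := mul_le_mul h1 h2 h4 zero_le_one
      _ = 1 := one_mul 1
  have hVpm : ∀ x, V x ≤ plusPart V x ∧ 0 ≤ plusPart V x ∧ |V x| ≤ plusPart V x + minusPart V x := by
    intro x
    unfold plusPart minusPart
    refine ⟨le_max_left _ _, le_max_right _ _, ?_⟩
    rcases le_total 0 (V x) with h | h
    · rw [abs_of_nonneg h]; linarith [le_max_left (V x) 0, le_max_right (-V x) 0]
    · rw [abs_of_nonpos h]; linarith [le_max_right (V x) 0, le_max_left (-V x) 0]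
  refine setIntegral_mono_on ?_ hVp measurableSet_ball ?_
  · refine Integrable.mono' (hVp.add hVn) (Measurable.aestronglyMeasurable (by fun_prop)) ?_
    filter_upwards [ae_restrict_mem measurableSet_ball] with x hx
    have h := hpt x hx
    rw [mul_assoc, Real.norm_eq_abs, abs_mul, abs_of_nonneg h.1]
    exact (mul_le_of_le_one_right (abs_nonneg _) h.2).trans (hVpm x).2.2
  · intro x hx
    have h := hpt x hx
    rw [mul_assoc]
    calc _ ≤ plusPart V x * ((|u x| ^ (p - 2) * u x) * tphi p b r x₀ u x) :=
          mul_le_mul_of_nonneg_right (hVpm x).1 h.1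
      _ ≤ _ := mul_le_of_le_one_right (hVpm x).2.1 h.2

lemma holder_pot {n : ℕ} {p s q : ℝ} (hq : 1 < q) {V : Rn n → ℝ}
    (hV : IsPotential n p s q V) {Ω B : Set (Rn n)} (hΩ : IsOpen Ω) (hΩb : Bornology.IsBounded Ω)
    (hB : MeasurableSet B) (hBΩ : B ⊆ Ω) :
    ∫ x in B, plusPart V x ≤ lqNormOn n q Ω (plusPart V) * volume.real B ^ (1 - 1 / q) := by
  have hBf : volume B ≠ ⊤ := (hΩb.subset hBΩ).measure_lt_top.ne
  have : IsFiniteMeasure (volume.restrict B) := ⟨by simpa using (hΩb.subset hBΩ).measure_lt_top⟩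
  have hq' := Real.HolderConjugate.conjExponent hq
  have hm : Measurable (plusPart V) := by
    have := hV.measurable
    unfold plusPart; fun_prop
  have h1 : IntegrableOn (fun x => plusPart V x ^ q) Ω :=
    (hV.plusPart_locLq.integrableOn_isCompact hΩb.isCompact_closure).mono_set subset_closure
  have h0 : ∀ x, 0 ≤ plusPart V x := fun x => le_max_right _ _
  have hL : MemLp (plusPart V) (ENNReal.ofReal q) (volume.restrict B) := by
    rw [← integrable_norm_rpow_iff hm.aestronglyMeasurable
      (by simp; linarith) ENNReal.ofReal_ne_top, ENNReal.toReal_ofReal (by linarith)]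
    refine (h1.mono_set hBΩ).congr (Eventually.of_forall fun x => ?_)
    simp only [Real.norm_of_nonneg (h0 x)]
  have h2 := integral_mul_le_Lp_mul_Lq_of_nonneg (μ := volume.restrict B) hq'
    (f := plusPart V) (g := fun _ => (1:ℝ)) (Eventually.of_forall h0)
    (Eventually.of_forall fun _ => zero_le_one) hL (memLp_const 1)
  simp only [mul_one, Real.one_rpow, integral_const, smul_eq_mul, measureReal_restrict_apply MeasurableSet.univ,
    univ_inter] at h2
  have e : 1 / q.conjExponent = 1 - 1 / q := by
    unfold Real.conjExponent
    have : q - 1 ≠ 0 := by linarith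
    field_simp
  rw [e] at h2
  refine h2.trans (mul_le_mul_of_nonneg_right ?_ (by positivity))
  unfold lqNormOn
  refine Real.rpow_le_rpow (integral_nonneg fun x => Real.rpow_nonneg (h0 x) _) ?_
    (by have : 0 < q := by linarith
        positivity)
  have e2 : ∀ x, |plusPart V x| ^ q = plusPart V x ^ q := fun x => by rw [abs_of_nonneg (h0 x)]
  simp only [e2]
  exact setIntegral_mono_set h1 (Eventually.of_forall fun x => Real.rpow_nonneg (h0 x) _)
    (Eventually.of_forall fun x hx => hBΩ hx)

def C2 (p : ℝ) : ℝ := C1 p + 2 ^ (p - 1)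

def gam {n : ℕ} (p R : ℝ) (x₀ : Rn n) (u : Rn n → ℝ) : Rn n → ℝ :=
  (ball x₀ R)ᶜ.indicator (fun y => |minusPart u y| ^ (p - 1))

def chi {n : ℕ} (ρ : ℝ) (x₀ : Rn n) : Rn n → ℝ := (ball x₀ ρ).indicator (fun _ => 1)

lemma gam_nonneg {n : ℕ} {p R : ℝ} {x₀ : Rn n} {u : Rn n → ℝ} (y) : 0 ≤ gam p R x₀ u y :=
  indicator_nonneg (fun _ _ => by positivity) y

lemma chi_nonneg {n : ℕ} {ρ : ℝ} {x₀ : Rn n} (y) : 0 ≤ chi ρ x₀ y :=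
  indicator_nonneg (fun _ _ => zero_le_one) y

lemma pt_far' {n : ℕ} {p b r R : ℝ} (hp : 1 < p) (hb : 0 < b) (hr : 0 < r) (hrR : r < R / 2)
    {x₀ : Rn n} {u : Rn n → ℝ} (hu0 : ∀ x ∈ ball x₀ R, 0 ≤ u x) {x y : Rn n}
    (hy : y ∉ ball x₀ R) :
    Hp p (u x - u y) * (tphi p b r x₀ u x - tphi p b r x₀ u y) ≤
      C2 p * (|cut x₀ r x - cut x₀ r y| ^ p + 1 / b ^ (p-1) *
        (chi (3 / 2 * r) x₀ x * gam p R x₀ u y)) := by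
  have hC1 := C1_pos hp
  have hC2 : 2 ^ (p-1) ≤ C2 p := by unfold C2; linarith
  have hC20 : 0 < C2 p := lt_of_lt_of_le (by positivity) hC2
  have hyρ : y ∉ ball x₀ (3 / 2 * r) := fun h => hy (ball_subset_ball (by linarith) h)
  have hχ := chi_nonneg (ρ := 3 / 2 * r) (x₀ := x₀) x
  have hγ := gam_nonneg (p := p) (R := R) (x₀ := x₀) (u := u) y
  have hR0 : 0 ≤ |cut x₀ r x - cut x₀ r y| ^ p + 1 / b ^ (p-1) *
        (chi (3 / 2 * r) x₀ x * gam p R x₀ u y) := by positivity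
  rw [tphi_zero hp hr u hyρ, sub_zero]
  by_cases hx : x ∈ ball x₀ (3 / 2 * r)
  · have hux := hu0 x (ball_subset_ball (by linarith) hx)
    have h := pt_far (W := u y) hp hb (cut_nonneg x₀ r x) hux
    unfold tphi
    rw [max_eq_left hux]
    refine h.trans ?_
    have hχ1 : chi (3 / 2 * r) x₀ x = 1 := indicator_of_mem hx _
    have hγ1 : gam p R x₀ u y = (max (-u y) 0) ^ (p-1) := by
      unfold gam
      rw [indicator_of_mem (show y ∈ (ball x₀ R)ᶜ from hy)]
      unfold minusPart; rw [abs_of_nonneg (le_max_right _ _)]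
    have h0 := cut_nonneg x₀ r x
    rw [cut_eq_zero hr hyρ, sub_zero, abs_of_nonneg h0, hχ1, ← hγ1, one_mul]
    have h1 : cut x₀ r x ^ p ≤ 1 := Real.rpow_le_one h0 (cut_le_one _ _ _) (by linarith)
    rw [mul_assoc]
    refine mul_le_mul hC2 ?_ (by positivity) hC20.le
    rw [mul_add, mul_one]
    have : cut x₀ r x ^ p * (1 / b ^ (p-1) * gam p R x₀ u y) ≤ 1 * (1 / b ^ (p-1) * gam p R x₀ u y) :=
      mul_le_mul_of_nonneg_right h1 (by positivity)
    linarith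
  · rw [tphi_zero hp hr u hx, mul_zero]; positivity

lemma pt_all {n : ℕ} {p b r R : ℝ} (hp : 1 < p) (hb : 0 < b) (hr : 0 < r) (hrR : r < R / 2)
    {x₀ : Rn n} {u : Rn n → ℝ} (hu0 : ∀ x ∈ ball x₀ R, 0 ≤ u x) (x y : Rn n) :
    Hp p (u x - u y) * (tphi p b r x₀ u x - tphi p b r x₀ u y) ≤
      C2 p * (|cut x₀ r x - cut x₀ r y| ^ p + 1 / b ^ (p-1) *
        (chi (3 / 2 * r) x₀ x * gam p R x₀ u y + chi (3 / 2 * r) x₀ y * gam p R x₀ u x))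
      - (p-1) * (ball x₀ r ×ˢ ball x₀ r).indicator
          (fun z => |log (u z.1 + b) - log (u z.2 + b)| ^ p) (x, y) := by
  have hC1 := C1_pos hp
  have hC2 : 2 ^ (p-1) ≤ C2 p := by unfold C2; linarith
  have hC12 : C1 p ≤ C2 p := by
    unfold C2; have : (0:ℝ) < 2 ^ (p-1) := by positivity
    linarith
  have hC20 : 0 < C2 p := lt_of_lt_of_le (by positivity) hC2
  have hχx := chi_nonneg (ρ := 3 / 2 * r) (x₀ := x₀) x
  have hγy := gam_nonneg (p := p) (R := R) (x₀ := x₀) (u := u) y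
  have hχy := chi_nonneg (ρ := 3 / 2 * r) (x₀ := x₀) y
  have hγx := gam_nonneg (p := p) (R := R) (x₀ := x₀) (u := u) x
  have hib : 0 ≤ 1 / b ^ (p-1) := by positivity
  have hT1 : 0 ≤ C2 p * (1 / b ^ (p-1) * (chi (3 / 2 * r) x₀ x * gam p R x₀ u y)) := by positivity
  have hT2 : 0 ≤ C2 p * (1 / b ^ (p-1) * (chi (3 / 2 * r) x₀ y * gam p R x₀ u x)) := by positivity
  have hsubR : ball x₀ r ⊆ ball x₀ R := ball_subset_ball (by linarith)
  have hT0 : 0 ≤ |cut x₀ r x - cut x₀ r y| ^ p := by positivity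
  by_cases hy : y ∈ ball x₀ R
  · by_cases hx : x ∈ ball x₀ R
    · have hux := hu0 x hx
      have huy := hu0 y hy
      have e : u x - u y = (u x + b) - (u y + b) := by ring
      by_cases hz : (x, y) ∈ ball x₀ r ×ˢ ball x₀ r
      · rw [indicator_of_mem hz]
        have h := pt_log hp (show 0 < u x + b by linarith) (show 0 < u y + b by linarith)
        unfold tphi
        rw [cut_eq_one hr hz.1, cut_eq_one hr hz.2, max_eq_left hux, max_eq_left huy, Real.one_rpow,
          one_mul, one_mul, sub_self, abs_zero, Real.zero_rpow (by linarith), e]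
        simp only
        linarith
      · rw [indicator_of_notMem hz]
        have h := pt_cut hp (show 0 < u x + b by linarith) (show 0 < u y + b by linarith)
          (cut_nonneg x₀ r x) (cut_nonneg x₀ r y)
        unfold tphi
        rw [max_eq_left hux, max_eq_left huy, e]
        have := mul_le_mul_of_nonneg_right hC12 hT0
        linarith
    · have hz : (x, y) ∉ ball x₀ r ×ˢ ball x₀ r := fun h => hx (hsubR h.1)
      rw [indicator_of_notMem hz]
      have h := pt_far' hp hb hr hrR hu0 (x := y) (y := x) hx
      rw [abs_sub_comm, show u y - u x = -(u x - u y) by ring, Hp_neg] at h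
      linarith
  · have hz : (x, y) ∉ ball x₀ r ×ˢ ball x₀ r := fun h => hy (hsubR h.2)
    rw [indicator_of_notMem hz]
    have h := pt_far' hp hb hr hrR hu0 (x := x) (y := y) hy
    linarith

lemma log_lip {b A B : ℝ} (hb : 0 < b) (hA : b ≤ A) (hB : b ≤ B) :
    |log A - log B| ≤ b⁻¹ * |A - B| := by
  wlog h : B ≤ A generalizing A B
  · rw [abs_sub_comm, abs_sub_comm A]; exact this hB hA (le_of_not_ge h)
  have hB0 : 0 < B := by linarith
  have hA0 : 0 < A := by linarith
  rw [abs_of_nonneg (by linarith [Real.log_le_log hB0 h]), abs_of_nonneg (by linarith),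
    ← Real.log_div hA0.ne' hB0.ne']
  refine (Real.log_le_sub_one_of_pos (by positivity)).trans ?_
  rw [show A / B - 1 = B⁻¹ * (A - B) by field_simp]
  exact mul_le_mul_of_nonneg_right (inv_anti₀ hb hB) (by linarith)

lemma gagw_int {n : ℕ} {p s b r R : ℝ} (hp : 1 < p) (hb : 0 < b) (hrR : r ≤ R)
    {x₀ : Rn n} {u : Rn n → ℝ} {Ω : Set (Rn n)} (hu : MemX n p s Ω u) (hsub : ball x₀ R ⊆ Ω)
    (hu0 : ∀ x ∈ ball x₀ R, 0 ≤ u x) :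
    IntegrableOn (gagliardoIntegrand n p s (fun x => log (u x + b))) (ball x₀ r ×ˢ ball x₀ r) := by
  have hum := hu.1
  have hsub' := ball_subset_ball (x := x₀) hrR
  have h1 : IntegrableOn (gagliardoIntegrand n p s u) (ball x₀ r ×ˢ ball x₀ r) :=
    hu.2.2.mono_set (fun z hz => Or.inl (hsub (hsub' hz.1)))
  refine Integrable.mono' (h1.const_mul (b⁻¹ ^ p)) (gag_meas (by fun_prop)).aestronglyMeasurable ?_
  filter_upwards [ae_restrict_mem (measurableSet_ball.prod measurableSet_ball)] with z hz
  rw [Real.norm_of_nonneg (gag_nonneg _ _)]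
  unfold gagliardoIntegrand
  rw [← mul_assoc, ← Real.mul_rpow (by positivity) (abs_nonneg _)]
  refine mul_le_mul_of_nonneg_right ?_ (by positivity)
  refine Real.rpow_le_rpow (abs_nonneg _) ?_ (by linarith)
  have h1 := hu0 _ (hsub' hz.1)
  have h2 := hu0 _ (hsub' hz.2)
  have := log_lip hb (show b ≤ u z.1 + b by linarith) (show b ≤ u z.2 + b by linarith)
  simpa using this

lemma chi_int {n : ℕ} {ρ : ℝ} {x₀ : Rn n} : Integrable (chi ρ x₀) := by
  unfold chi
  rw [integrable_indicator_iff measurableSet_ball]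
  exact integrableOn_const (measure_ball_lt_top.ne)

lemma chi_val {n : ℕ} {ρ : ℝ} {x₀ : Rn n} : ∫ x, chi ρ x₀ x = volume.real (ball x₀ ρ) := by
  unfold chi
  rw [integral_indicator measurableSet_ball]; simp

def GG {n : ℕ} (p s R : ℝ) (u : Rn n → ℝ) (x₀ : Rn n) : Rn n → ℝ :=
  (ball x₀ R)ᶜ.indicator (tint p s u x₀)

lemma cg_bd {n : ℕ} {p s r R : ℝ} (hp : 1 < p) (hs0 : 0 < s) (hr : 0 < r) (hrR : r < R / 2)
    {x₀ : Rn n} {u : Rn n → ℝ} (x y : Rn n) :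
    chi (3 / 2 * r) x₀ x * gam p R x₀ u y * ‖x - y‖ ^ (-(n : ℝ) - p * s) ≤
      4 ^ ((n : ℝ) + p * s) * (chi (3 / 2 * r) x₀ x * GG p s R u x₀ y) := by
  by_cases hx : x ∈ ball x₀ (3 / 2 * r)
  · by_cases hy : y ∈ ball x₀ R
    · have h1 : gam p R x₀ u y = 0 := indicator_of_notMem (by simpa using hy) _
      have h2 : GG p s R u x₀ y = 0 := indicator_of_notMem (by simpa using hy) _
      rw [h1, h2]; simp
    · have h1 : gam p R x₀ u y = |minusPart u y| ^ (p-1) := indicator_of_mem (by simpa using hy) _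
      have h2 : GG p s R u x₀ y = tint p s u x₀ y := indicator_of_mem (by simpa using hy) _
      have h3 : chi (3 / 2 * r) x₀ x = 1 := indicator_of_mem hx _
      rw [h1, h2, h3, one_mul, one_mul]
      have hy' : R ≤ ‖y - x₀‖ := by
        rw [mem_ball, dist_eq_norm, not_lt] at hy; exact hy
      have hx' : ‖x - x₀‖ < 3 / 2 * r := by rw [mem_ball, dist_eq_norm] at hx; exact hx
      have hk : ‖x - y‖ ^ (-(n : ℝ) - p * s) ≤ 4 ^ ((n : ℝ) + p * s) * ‖y - x₀‖ ^ (-(n : ℝ) - p * s) := by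
        refine norm_comp hp hs0 (by norm_num) (by linarith) ?_
        have : y - x₀ = (x - x₀) - (x - y) := by abel
        have h4 : ‖y - x₀‖ ≤ ‖x - x₀‖ + ‖x - y‖ := by
          rw [this]; exact norm_sub_le _ _
        linarith
      unfold tint
      calc _ ≤ |minusPart u y| ^ (p-1) * (4 ^ ((n : ℝ) + p * s) * ‖y - x₀‖ ^ (-(n : ℝ) - p * s)) :=
            mul_le_mul_of_nonneg_left hk (by positivity)
        _ = _ := by ring
  · have h3 : chi (3 / 2 * r) x₀ x = 0 := indicator_of_notMem hx _
    rw [h3]; simp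

lemma pair_bd {n : ℕ} (hn : 1 ≤ n) {p s lam Lam b r R : ℝ} (hp : 1 < p) (hs0 : 0 < s) (hs1 : s < 1)
    (hlam : 0 < lam) (hlL : lam ≤ Lam) (hb : 0 < b) (hr : 0 < r) (hrR : r < R / 2)
    {x₀ : Rn n} {u K : Rn n → ℝ} {Ω : Set (Rn n)} (hΩ : IsOpen Ω)
    (hK : KernelClass n p s lam Lam K) (hu : MemX n p s Ω u)
    (hφ : MemX n p s Ω (tphi p b r x₀ u)) (hsub : ball x₀ R ⊆ Ω)
    (hu0 : ∀ x ∈ ball x₀ R, 0 ≤ u x) :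
    pairing n p K u (tphi p b r x₀ u) ≤
      cnps n p s * Lam * C2 p * (2 * (volume.real (ball x₀ (3 / 2 * r)) * (r ^ (-(p * s)) * JJ n p s))
        + 1 / b ^ (p-1) * (4 ^ ((n : ℝ) + p * s) * (2 * (volume.real (ball x₀ (3 / 2 * r)) *
            ∫ y in (ball x₀ R)ᶜ, tint p s u x₀ y))))
      - (p-1) * (cnps n p s * lam) * ∫ z in ball x₀ r ×ˢ ball x₀ r,
          gagliardoIntegrand n p s (fun x => log (u x + b)) z := by
  have hc : 0 < cnps n p s := cnps_pos hp hs1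
  have hC1 := C1_pos hp
  have hC20 : 0 < C2 p := by unfold C2; positivity
  have hLam : 0 < Lam := by linarith
  have hsubρ : ball x₀ (3 / 2 * r) ⊆ Ω := (ball_subset_ball (by linarith)).trans hsub
  have hI := pair_int hp hs1 hlam hlL hΩ hK hu hφ
    (fun x hx => tphi_zero hp hr u (fun h => hx (hsubρ h)))
  have hcut := cut_gag hn hp hs0 hs1 hr x₀
  have hG : Integrable (GG p s R u x₀) := by
    unfold GG
    rw [integrable_indicator_iff measurableSet_ball.compl]
    exact tint_int hn hp hs0 hs1 (by linarith) hu hsub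
  have hGv : ∫ y, GG p s R u x₀ y = ∫ y in (ball x₀ R)ᶜ, tint p s u x₀ y :=
    integral_indicator measurableSet_ball.compl
  have hχ : Integrable (chi (3 / 2 * r) x₀) := chi_int
  have hP1 : Integrable (fun z : Rn n × Rn n => chi (3 / 2 * r) x₀ z.1 * GG p s R u x₀ z.2) :=
    hχ.mul_prod hG
  have hP2 : Integrable (fun z : Rn n × Rn n => GG p s R u x₀ z.1 * chi (3 / 2 * r) x₀ z.2) :=
    hG.mul_prod hχ
  have hv1 : ∫ z : Rn n × Rn n, chi (3 / 2 * r) x₀ z.1 * GG p s R u x₀ z.2 =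
      volume.real (ball x₀ (3 / 2 * r)) * ∫ y in (ball x₀ R)ᶜ, tint p s u x₀ y := by
    rw [Measure.volume_eq_prod, integral_prod_mul, chi_val, hGv]
  have hv2 : ∫ z : Rn n × Rn n, GG p s R u x₀ z.1 * chi (3 / 2 * r) x₀ z.2 =
      volume.real (ball x₀ (3 / 2 * r)) * ∫ y in (ball x₀ R)ᶜ, tint p s u x₀ y := by
    rw [Measure.volume_eq_prod, integral_prod_mul, chi_val, hGv, mul_comm]
  have hw := gagw_int (r := r) hp hb (show r ≤ R by linarith) hu hsub hu0
  have hmr : MeasurableSet (ball x₀ r ×ˢ ball x₀ r) := measurableSet_ball.prod measurableSet_ball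
  rw [← integrable_indicator_iff hmr] at hw
  set W := gagliardoIntegrand n p s (fun x => log (u x + b)) with hW
  set S := ball x₀ r ×ˢ ball x₀ r with hS
  set E := (4:ℝ) ^ ((n : ℝ) + p * s) with hE
  have hE0 : 0 < E := by positivity
  set ib := 1 / b ^ (p-1) with hib
  have hib0 : 0 < ib := by positivity
  have hD1 := (hcut.1.add (((hP1.add hP2).const_mul (ib * E)))).const_mul (cnps n p s * Lam * C2 p)
  simp only [Pi.add_apply] at hD1
  have hD2 := hw.const_mul ((p-1) * (cnps n p s * lam))
  refine (integral_mono hI (hD1.sub hD2) ?_).trans ?_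
  · intro z
    simp only [Pi.add_apply, Pi.sub_apply]
    have hA0 : 0 ≤ GG p s R u x₀ z.1 := indicator_nonneg (fun _ _ => tint_nonneg) _
    have hA1 : 0 ≤ GG p s R u x₀ z.2 := indicator_nonneg (fun _ _ => tint_nonneg) _
    have hX0 := chi_nonneg (ρ := 3 / 2 * r) (x₀ := x₀) z.1
    have hX1 := chi_nonneg (ρ := 3 / 2 * r) (x₀ := x₀) z.2
    have hg1 := gam_nonneg (p := p) (R := R) (x₀ := x₀) (u := u) z.1
    have hg2 := gam_nonneg (p := p) (R := R) (x₀ := x₀) (u := u) z.2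
    by_cases hz : z.1 = z.2
    · have e1 : W z = 0 := by
        rw [hW]; unfold gagliardoIntegrand
        rw [hz, sub_self, abs_zero, Real.zero_rpow (by linarith), zero_mul]
      have e2 : S.indicator W z = 0 := by
        by_cases h : z ∈ S
        · rw [indicator_of_mem h, e1]
        · rw [indicator_of_notMem h]
      rw [e2, hz]
      simp only [sub_self, mul_zero, zero_mul, sub_zero]
      have := gag_nonneg (p := p) (s := s) (cut x₀ r) z
      rw [hz] at hA0 hX0
      positivity
    · have hne := sub_ne_zero.2 hz
      have hKK := hK.2.2 _ hne
      have hK0 := (K_bd hp hs1 hlam hK hne).1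
      have h := mul_le_mul_of_nonneg_right (pt_all hp hb hr hrR hu0 z.1 z.2) hK0
      have c1 := cg_bd hp hs0 hr hrR (x₀ := x₀) (u := u) z.1 z.2
      have c2 := cg_bd hp hs0 hr hrR (x₀ := x₀) (u := u) z.2 z.1
      rw [norm_sub_rev z.2 z.1] at c2
      set k := ‖z.1 - z.2‖ ^ (-(n : ℝ) - p * s) with hk
      have hk0 : 0 ≤ k := by positivity
      refine h.trans ?_
      rw [sub_mul]
      refine sub_le_sub ?_ ?_
      · set P := |cut x₀ r z.1 - cut x₀ r z.2| ^ p with hP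
        have hP0 : 0 ≤ P := by positivity
        have eP : gagliardoIntegrand n p s (cut x₀ r) z = P * k := rfl
        rw [eP]
        set a1 := chi (3 / 2 * r) x₀ z.1 * gam p R x₀ u z.2 with ha1
        set a2 := chi (3 / 2 * r) x₀ z.2 * gam p R x₀ u z.1 with ha2
        have ha10 : 0 ≤ a1 := by positivity
        have ha20 : 0 ≤ a2 := by positivity
        calc C2 p * (P + ib * (a1 + a2)) * K (z.1 - z.2)
            ≤ C2 p * (P + ib * (a1 + a2)) * (cnps n p s * Lam * k) :=
              mul_le_mul_of_nonneg_left hKK.2 (by positivity)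
          _ = cnps n p s * Lam * C2 p * (P * k + ib * (a1 * k + a2 * k)) := by ring
          _ ≤ cnps n p s * Lam * C2 p * (P * k + ib * (E * (chi (3 / 2 * r) x₀ z.1 * GG p s R u x₀ z.2)
                + E * (chi (3 / 2 * r) x₀ z.2 * GG p s R u x₀ z.1))) := by gcongr
          _ = _ := by ring
      · by_cases hzS : z ∈ S
        · have e1 : S.indicator (fun z => |log (u z.1 + b) - log (u z.2 + b)| ^ p) (z.1, z.2) =
              |log (u z.1 + b) - log (u z.2 + b)| ^ p := indicator_of_mem hzS _
          rw [indicator_of_mem hzS, e1, hW]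
          unfold gagliardoIntegrand
          simp only
          rw [← hk]
          set Q := |log (u z.1 + b) - log (u z.2 + b)| ^ p
          have hQ : 0 ≤ Q := by positivity
          have hp1 : 0 ≤ p - 1 := by linarith
          calc (p-1) * (cnps n p s * lam) * (Q * k) = ((p-1) * Q) * (cnps n p s * lam * k) := by ring
            _ ≤ ((p-1) * Q) * K (z.1 - z.2) := mul_le_mul_of_nonneg_left hKK.1 (by positivity)
        · have e1 : S.indicator (fun z => |log (u z.1 + b) - log (u z.2 + b)| ^ p) (z.1, z.2) =
              0 := indicator_of_notMem hzS _
          rw [indicator_of_notMem hzS, e1]; simp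
  simp only [Pi.sub_apply, Pi.add_apply]
  rw [integral_sub hD1 hD2, integral_const_mul, integral_const_mul, integral_indicator hmr]
  refine sub_le_sub_right ?_ _
  refine mul_le_mul_of_nonneg_left ?_ (by positivity)
  have e := integral_add hcut.1 ((hP1.add hP2).const_mul (ib * E))
  simp only [Pi.add_apply] at e
  rw [e, integral_const_mul, integral_add hP1 hP2, hv1, hv2]
  have := hcut.2
  linarith

lemma energy {n : ℕ} (hn : 1 ≤ n) {p s q lam Lam b r R : ℝ} (hp : 1 < p) (hs0 : 0 < s) (hs1 : s < 1)
    (hlam : 0 < lam) (hlL : lam ≤ Lam) (hq : 1 < q) (hb : 0 < b) (hr : 0 < r) (hrR : r < R / 2)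
    {x₀ : Rn n} {u K V g : Rn n → ℝ} {Ω : Set (Rn n)} (hΩ : IsOpen Ω) (hΩb : Bornology.IsBounded Ω)
    (hV : IsPotential n p s q V)
    (hK : KernelClass n p s lam Lam K) (hu : WeakSupersolution n p s Ω K V g u)
    (hsub : ball x₀ R ⊆ Ω) (hu0 : ∀ x ∈ ball x₀ R, 0 ≤ u x) :
    (p-1) * (cnps n p s * lam) * ∫ z in ball x₀ r ×ˢ ball x₀ r,
        gagliardoIntegrand n p s (fun x => log (u x + b)) z ≤
      cnps n p s * Lam * C2 p * (2 * (volume.real (ball x₀ (3 / 2 * r)) * (r ^ (-(p * s)) * JJ n p s))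
        + 1 / b ^ (p-1) * (4 ^ ((n : ℝ) + p * s) * (2 * (volume.real (ball x₀ (3 / 2 * r)) *
          ∫ y in (ball x₀ R)ᶜ, tint p s u x₀ y)))) +
      lqNormOn n q Ω (plusPart V) * volume.real (ball x₀ (3 / 2 * r)) ^ (1 - 1 / q) := by
  have hX : MemX n p s Ω u := hu.1.1.1
  have hsubρ : ball x₀ (3 / 2 * r) ⊆ Ω := (ball_subset_ball (by linarith)).trans hsub
  have hφ := tphi_mem hn hp hs0 hs1 hq hb hr x₀ hΩ hΩb hX hV hsubρ
  have h1 := hu.2 _ hφ (tphi_nonneg hb x₀ u)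
  have h2 := pot_bd hp hq hb hr hrR hX.1 hV hu0
  have h3 := holder_pot hq hV hΩ hΩb (measurableSet_ball (x := x₀) (ε := 3 / 2 * r)) hsubρ
  have h4 := pair_bd hn hp hs0 hs1 hlam hlL hb hr hrR hΩ hK hX hφ.1.1 hsub hu0
  linarith

lemma osc {n : ℕ} {p s a b r R : ℝ} (hp : 1 < p) (hs0 : 0 < s) (ha : 0 < a)
    (hb : 0 < b) (hr : 0 < r) (hrR : r < R / 2)
    {x₀ : Rn n} {u : Rn n → ℝ} {Ω : Set (Rn n)}
    (hu : MemX n p s Ω u) (hsub : ball x₀ R ⊆ Ω) (hu0 : ∀ x ∈ ball x₀ R, 0 ≤ u x) :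
    let v : Rn n → ℝ := fun x => Real.log ((a + b) / (u x + b))
    IntegrableOn v (ball x₀ r) ∧
    IntegrableOn (fun x => |v x - (⨍ y in ball x₀ r, v y)| ^ p) (ball x₀ r) ∧
    (⨍ x in ball x₀ r, |v x - (⨍ y in ball x₀ r, v y)| ^ p) ≤
      (volume.real (ball x₀ r))⁻¹ * ((volume.real (ball x₀ r))⁻¹ *
       ((2 * r) ^ ((n : ℝ) + p * s) * ∫ z in ball x₀ r ×ˢ ball x₀ r,
        gagliardoIntegrand n p s (fun x => log (u x + b)) z)) := by
  intro v
  have hps : 0 < p * s := by positivity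
  have hum := hu.1
  have hvm : Measurable v := by fun_prop
  have hsub' : ball x₀ r ⊆ ball x₀ R := ball_subset_ball (by linarith)
  set μ := volume.restrict (ball x₀ r) with hμ
  have : IsFiniteMeasure μ := ⟨by rw [hμ]; simpa using measure_ball_lt_top⟩
  have : NeZero μ := ⟨by
    rw [hμ, Ne, Measure.restrict_eq_zero]; exact (measure_ball_pos _ _ hr).ne'⟩
  have hμu : μ.real univ = volume.real (ball x₀ r) := by rw [hμ]; simp [measureReal_def]
  have hvv : ∀ x ∈ ball x₀ r, v x = log (a + b) - log (u x + b) := fun x hx => by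
    have := hu0 x (hsub' hx)
    exact Real.log_div (by positivity) (by positivity)
  have hv : Integrable v μ := by
    have h1 : Integrable (fun x => |u x| ^ p) μ := hu.2.1.mono_set (hsub'.trans hsub)
    have h2 : Integrable (fun x => |log (a+b) - log b| + b⁻¹ * (1 + |u x| ^ p)) μ :=
      (integrable_const _).add (((integrable_const _).add h1).const_mul _)
    refine Integrable.mono' h2 hvm.aestronglyMeasurable ?_
    filter_upwards [ae_restrict_mem measurableSet_ball] with x hx
    have h0 := hu0 x (hsub' hx)
    rw [hvv x hx, Real.norm_eq_abs]
    have h3 := log_lip hb (le_refl b) (show b ≤ u x + b by linarith)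
    have h4 : |b - (u x + b)| ≤ 1 + |u x| ^ p := by
      rw [show b - (u x + b) = - u x by ring, abs_neg]
      rcases le_total (|u x|) 1 with h | h
      · have : 0 ≤ |u x| ^ p := by positivity
        linarith
      · have := Real.rpow_le_rpow_of_exponent_le h hp.le
        rw [Real.rpow_one] at this; linarith
    have h5 : b⁻¹ * |b - (u x + b)| ≤ b⁻¹ * (1 + |u x| ^ p) := by gcongr
    calc |log (a+b) - log (u x + b)| = |(log (a+b) - log b) + (log b - log (u x + b))| := by ring_nf
      _ ≤ _ := (abs_add_le _ _).trans (by linarith)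
  have hG := gagw_int (r := r) hp hb (show r ≤ R by linarith) hu hsub hu0
  have hprod : μ.prod μ = volume.restrict (ball x₀ r ×ˢ ball x₀ r) := by
    rw [hμ, Measure.prod_restrict, Measure.volume_eq_prod]
  have hmr : MeasurableSet (ball x₀ r ×ˢ ball x₀ r) := measurableSet_ball.prod measurableSet_ball
  have hpt : ∀ z ∈ ball x₀ r ×ˢ ball x₀ r, |v z.1 - v z.2| ^ p ≤ (2 * r) ^ ((n : ℝ) + p * s) *
      gagliardoIntegrand n p s (fun x => log (u x + b)) z := by
    intro z hz
    unfold gagliardoIntegrand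
    rw [hvv _ hz.1, hvv _ hz.2, show log (a + b) - log (u z.1 + b) - (log (a + b) - log (u z.2 + b)) =
      -(log (u z.1 + b) - log (u z.2 + b)) by ring, abs_neg]
    by_cases he : z.1 = z.2
    · rw [he]; simp [Real.zero_rpow (show p ≠ 0 by linarith)]
    · have hd : 0 < ‖z.1 - z.2‖ := norm_pos_iff.2 (sub_ne_zero.2 he)
      have hd2 : ‖z.1 - z.2‖ ≤ 2 * r := by
        have e1 := mem_ball_iff_norm.1 hz.1
        have e2 := mem_ball_iff_norm.1 hz.2
        calc ‖z.1 - z.2‖ = ‖(z.1 - x₀) - (z.2 - x₀)‖ := by congr 1; abel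
          _ ≤ _ := (norm_sub_le _ _).trans (by linarith)
      have h1 : 1 ≤ (2 * r) ^ ((n : ℝ) + p * s) * ‖z.1 - z.2‖ ^ (-(n : ℝ) - p * s) := by
        rw [show -(n : ℝ) - p * s = -((n : ℝ) + p * s) by ring, Real.rpow_neg hd.le,
          ← div_eq_mul_inv, one_le_div (by positivity)]
        exact Real.rpow_le_rpow hd.le hd2 (by positivity)
      have h2 : 0 ≤ |log (u z.1 + b) - log (u z.2 + b)| ^ p := by positivity
      nlinarith [mul_le_mul_of_nonneg_left h1 h2]
  have hF : Integrable (fun z : Rn n × Rn n => |v z.1 - v z.2| ^ p) (μ.prod μ) := by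
    rw [hprod]
    refine Integrable.mono' (hG.const_mul ((2 * r) ^ ((n : ℝ) + p * s))) (Measurable.aestronglyMeasurable (by fun_prop)) ?_
    filter_upwards [ae_restrict_mem hmr] with z hz
    rw [Real.norm_of_nonneg (by positivity)]
    exact hpt z hz
  obtain ⟨h1, h2⟩ := poinc μ hp hv hvm hF
  refine ⟨hv, h1, h2.trans ?_⟩
  rw [hμu]
  gcongr
  rw [hprod, ← integral_const_mul]
  rw [hprod] at hF
  exact setIntegral_mono_on hF (hG.const_mul _) hmr hpt

lemma tail_eq {n : ℕ} (hn : 1 ≤ n) {p s R : ℝ} (hp : 1 < p) (hs0 : 0 < s) (hR : 0 < R)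
    (u : Rn n → ℝ) (x₀ : Rn n) :
    ∫ y in (ball x₀ R)ᶜ, tint p s u x₀ y =
      sphereArea n / (p * s) * R ^ (-(p * s)) * tail n p s (minusPart u) x₀ R ^ (p - 1) := by
  have hω : 0 < (volume (ball (0 : Rn n) 1)).toReal :=
    ENNReal.toReal_pos (measure_ball_pos _ _ one_pos).ne' measure_ball_lt_top.ne
  have hS : 0 < sphereArea n := by
    unfold sphereArea
    have : (0:ℝ) < n := by exact_mod_cast hn
    positivity
  have hps : 0 < p * s := by positivity
  have hT : 0 ≤ ∫ y in (ball x₀ R)ᶜ, tint p s u x₀ y := integral_nonneg fun _ => tint_nonneg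
  have e : tail n p s (minusPart u) x₀ R = (p * s / sphereArea n * R ^ (p * s) *
      ∫ y in (ball x₀ R)ᶜ, tint p s u x₀ y) ^ (1 / (p - 1)) := rfl
  rw [e, ← Real.rpow_mul (by positivity), one_div, inv_mul_cancel₀ (by linarith), Real.rpow_one,
    Real.rpow_neg hR.le]
  have : 0 < R ^ (p * s) := by positivity
  field_simp

lemma r_le_diam {n : ℕ} (hn : 1 ≤ n) {r R : ℝ} (hr : 0 < r) (hrR : r < R / 2) {x₀ : Rn n}
    {Ω : Set (Rn n)} (hΩb : Bornology.IsBounded Ω) (hsub : ball x₀ R ⊆ Ω) : r ≤ diam Ω := by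
  have h1 : x₀ ∈ Ω := hsub (mem_ball_self (by linarith))
  set e : Rn n := EuclideanSpace.single ⟨0, hn⟩ r
  have he : ‖e‖ = r := by simp [e, abs_of_pos hr]
  have h2 : x₀ + e ∈ Ω := hsub (by rw [mem_ball_iff_norm, add_sub_cancel_left, he]; linarith)
  have := dist_le_diam_of_mem hΩb h2 h1
  rwa [dist_eq_norm, add_sub_cancel_left, he] at this

lemma vol_ball {n : ℕ} {r : ℝ} (hr : 0 < r) (x₀ : Rn n) :
    volume.real (ball x₀ r) = r ^ (n : ℝ) * volume.real (ball (0 : Rn n) 1) := by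
  rw [measureReal_def, Measure.addHaar_ball_of_pos _ _ hr, ENNReal.toReal_mul,
    ENNReal.toReal_ofReal (by positivity), measureReal_def, Real.rpow_natCast]
  simp


lemma num_h3 {n : ℕ} {p s q r D M : ℝ} (hps : 0 < p * s) (hq1 : 1 < q) (hq : (n : ℝ) / (p * s) < q)
    (hr : 0 < r) (hrD : r ≤ D) (hM : 0 < M) :
    r ^ (p * s) * (M * r ^ (n : ℝ)) ^ (1 - 1 / q) ≤
      (max 1 M * (max 1 D) ^ (p * s)) * r ^ (n : ℝ) := by
  have hq0 : 0 < q := by linarith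
  have hiq : 1 / q < 1 := by rw [div_lt_one hq0]; exact hq1
  have hiq0 : 0 < 1 / q := by positivity
  have h1 : M ^ (1 - 1 / q) ≤ max 1 M := by
    calc M ^ (1 - 1 / q) ≤ (max 1 M) ^ (1 - 1 / q) :=
          Real.rpow_le_rpow hM.le (le_max_right _ _) (by linarith)
      _ ≤ (max 1 M) ^ (1 : ℝ) := Real.rpow_le_rpow_of_exponent_le (le_max_left _ _) (by linarith)
      _ = max 1 M := Real.rpow_one _
  have hnq : (n : ℝ) / q < p * s := by
    rw [div_lt_iff₀ hps] at hq
    rw [div_lt_iff₀ hq0]; linarith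
  have hnq0 : 0 ≤ (n : ℝ) / q := by positivity
  have h2 : r ^ (p * s - n / q) ≤ (max 1 D) ^ (p * s) := by
    calc r ^ (p * s - n / q) ≤ (max 1 D) ^ (p * s - n / q) :=
          Real.rpow_le_rpow hr.le (hrD.trans (le_max_right _ _)) (by linarith)
      _ ≤ _ := Real.rpow_le_rpow_of_exponent_le (le_max_left _ _) (by linarith)
  have e : r ^ (p * s) * (M * r ^ (n : ℝ)) ^ (1 - 1 / q) =
      M ^ (1 - 1 / q) * r ^ (p * s - n / q) * r ^ (n : ℝ) := by
    rw [Real.mul_rpow hM.le (by positivity), ← Real.rpow_mul hr.le, mul_left_comm, mul_assoc,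
      ← Real.rpow_add hr, ← Real.rpow_add hr]
    congr 2
    field_simp
    ring
  rw [e]
  gcongr

lemma num {k I A M Q P J ib B S N X a3 τ Rp ω E avg : ℝ} (hk : 0 < k) (hA : 0 ≤ A) (hM : 0 < M)
    (hQ : 0 < Q) (hP : 0 < P) (hJ : 0 ≤ J) (hib : 0 ≤ ib) (hB : 0 ≤ B) (hS : 0 ≤ S) (hN : 0 ≤ N)
    (ha3 : 0 ≤ a3) (hτ : 0 ≤ τ) (hRp : 0 < Rp) (hω : 0 < ω) (hE : 0 ≤ E)
    (h1 : k * I ≤ A * (2 * (M * Q * (P⁻¹ * J)) + ib * (B * (2 * (M * Q * (S * Rp⁻¹ * τ))))) + N * X)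
    (h3 : P * X ≤ a3 * Q)
    (h2 : avg ≤ (Q * ω)⁻¹ * ((Q * ω)⁻¹ * (E * (Q * P) * I))) :
    avg ≤ (ω⁻¹ * ω⁻¹ * E / k * (A * (2 * M * J) + A * (B * (2 * (M * S))) + a3)) *
      (ib * (P / Rp) * τ + (1 + N)) := by
  set a1 := A * (2 * M * J) with ha1
  set a2 := A * (B * (2 * (M * S))) with ha2
  have ha10 : 0 ≤ a1 := by positivity
  have ha20 : 0 ≤ a2 := by positivity
  set Y := ib * (P / Rp) * τ with hY
  have hY0 : 0 ≤ Y := by positivity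
  have h4 : P / Q * (k * I) ≤ a1 + a2 * Y + a3 * N := by
    calc P / Q * (k * I) ≤ P / Q * (A * (2 * (M * Q * (P⁻¹ * J)) +
          ib * (B * (2 * (M * Q * (S * Rp⁻¹ * τ))))) + N * X) := by gcongr
      _ = a1 + a2 * Y + N * ((P * X) / Q) := by
          rw [ha1, ha2, hY]; field_simp
      _ ≤ a1 + a2 * Y + N * a3 := by
          have : (P * X) / Q ≤ a3 := by rwa [div_le_iff₀ hQ]
          gcongr
      _ = _ := by ring
  have h5 : a1 + a2 * Y + a3 * N ≤ (a1 + a2 + a3) * (Y + (1 + N)) := by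
    nlinarith [mul_nonneg ha10 hY0, mul_nonneg ha10 hN, mul_nonneg ha20 hN, mul_nonneg ha3 hY0]
  calc avg ≤ _ := h2
    _ = ω⁻¹ * ω⁻¹ * E / k * (P / Q * (k * I)) := by field_simp
    _ ≤ ω⁻¹ * ω⁻¹ * E / k * ((a1 + a2 + a3) * (Y + (1 + N))) := by
        exact mul_le_mul_of_nonneg_left (h4.trans h5) (by positivity)
    _ = _ := by ring

lemma lq_nonneg {n : ℕ} {q : ℝ} {Ω : Set (Rn n)} {f : Rn n → ℝ} : 0 ≤ lqNormOn n q Ω f := by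
  unfold lqNormOn
  exact Real.rpow_nonneg (integral_nonneg fun x => by positivity) _

lemma tail_nonneg {n : ℕ} {p s R : ℝ} (hp : 1 < p) (hs0 : 0 < s) (hR : 0 < R)
    {u : Rn n → ℝ} {x₀ : Rn n} : 0 ≤ tail n p s u x₀ R := by
  unfold tail sphereArea
  refine Real.rpow_nonneg (mul_nonneg (by positivity) (integral_nonneg fun x => by positivity)) _

/-- The main constant. -/
def CC (n : ℕ) (p s lam Lam D : ℝ) : ℝ :=
  let ω := volume.real (ball (0 : Rn n) 1)
  let M := (3 / 2 : ℝ) ^ (n : ℝ) * ω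
  let A := cnps n p s * Lam * C2 p
  ω⁻¹ * ω⁻¹ * 2 ^ ((n : ℝ) + p * s) / ((p - 1) * (cnps n p s * lam)) *
    (A * (2 * M * JJ n p s) + A * (4 ^ ((n : ℝ) + p * s) * (2 * (M * (sphereArea n / (p * s))))) +
      max 1 M * (max 1 D) ^ (p * s))

lemma om_pos (n : ℕ) : 0 < volume.real (ball (0 : Rn n) 1) :=
  ENNReal.toReal_pos (measure_ball_pos _ _ one_pos).ne' measure_ball_lt_top.ne

lemma sph_nonneg (n : ℕ) : 0 ≤ sphereArea n := by unfold sphereArea; positivity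

lemma C2_pos' {p : ℝ} (hp : 1 < p) : 0 < C2 p := by
  have := C1_pos hp
  unfold C2; positivity

lemma CC_pos {n : ℕ} {p s lam Lam D : ℝ} (hp : 1 < p) (hs0 : 0 < s) (hs1 : s < 1)
    (hlam : 0 < lam) (hlL : lam ≤ Lam) : 0 < CC n p s lam Lam D := by
  have h1 := om_pos n
  have h2 := C2_pos' hp
  have h3 := cnps_pos (n := n) hp hs1
  have h4 := JJ_nonneg n p s
  have h5 := sph_nonneg n
  have h6 : 0 < Lam := by linarith
  have h7 : 0 < p - 1 := by linarith
  have h8 : 0 < max 1 D := lt_max_of_lt_left one_pos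
  unfold CC
  positivity

lemma main_bd {n : ℕ} (hn : 1 ≤ n) {p s q lam Lam a b r R : ℝ} (hp : 1 < p) (hs0 : 0 < s) (hs1 : s < 1)
    (hlam : 0 < lam) (hlL : lam ≤ Lam) (hq : (n : ℝ) / (p * s) < q) (hq1 : 1 < (n : ℝ) / (p * s))
    (ha : 0 < a) (hb : 0 < b) (hr : 0 < r) (hrR : r < R / 2)
    {x₀ : Rn n} {u K V g : Rn n → ℝ} {Ω : Set (Rn n)} (hΩ : IsOpen Ω) (hΩb : Bornology.IsBounded Ω)
    (hV : IsPotential n p s q V)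
    (hK : KernelClass n p s lam Lam K) (hu : WeakSupersolution n p s Ω K V g u)
    (hsub : ball x₀ R ⊆ Ω) (hu0 : ∀ x ∈ ball x₀ R, 0 ≤ u x) :
    let v : Rn n → ℝ := fun x => Real.log ((a + b) / (u x + b))
    (⨍ x in ball x₀ r, |v x - (⨍ y in ball x₀ r, v y)| ^ p) ≤
      CC n p s lam Lam (diam Ω) * (1 / b ^ (p - 1) * (r / R) ^ (p * s) *
                tail n p s (minusPart u) x₀ R ^ (p - 1) +
              (1 + lqNormOn n q Ω (plusPart V))) := by
  intro v
  have hps : 0 < p * s := by positivity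
  have hR : 0 < R := by linarith
  have h1 := om_pos n
  have h2 := C2_pos' hp
  have h3 := cnps_pos (n := n) hp hs1
  have h4 := JJ_nonneg n p s
  have h5 := sph_nonneg n
  have h6 : 0 < Lam := by linarith
  have h7 : 0 < p - 1 := by linarith
  have h8 : 0 < max 1 (diam Ω) := lt_max_of_lt_left one_pos
  have e1 := energy hn hp hs0 hs1 hlam hlL (hq1.trans hq) hb hr hrR hΩ hΩb hV hK hu hsub hu0
  have e2 := (osc hp hs0 ha hb hr hrR hu.1.1.1 hsub hu0).2.2
  have hM : 0 < (3 / 2 : ℝ) ^ (n : ℝ) * volume.real (ball (0 : Rn n) 1) := by positivity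
  have e3 := num_h3 hps (hq1.trans hq) hq hr (r_le_diam hn hr hrR hΩb hsub) hM
  have hvρ : volume.real (ball x₀ (3 / 2 * r)) =
      (3 / 2 : ℝ) ^ (n : ℝ) * volume.real (ball (0 : Rn n) 1) * r ^ (n : ℝ) := by
    rw [vol_ball (by positivity), Real.mul_rpow (by norm_num) hr.le]; ring
  rw [hvρ, tail_eq hn hp hs0 hR, Real.rpow_neg hr.le, Real.rpow_neg hR.le] at e1
  rw [vol_ball hr, Real.mul_rpow (by norm_num) hr.le, Real.rpow_add hr] at e2
  rw [Real.div_rpow hr.le hR.le]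
  exact num (by positivity) (by positivity) hM (by positivity) (by positivity) h4 (by positivity)
    (by positivity) (by positivity) lq_nonneg (by positivity)
    (Real.rpow_nonneg (tail_nonneg hp hs0 hR) _) (by positivity) h1 (by positivity) e1 e3 e2

/-- the logarithm of a weak supersolution has bounded mean
oscillation (Lemma 5.1). -/
theorem log_of_supersolution_bmo
    (n : ℕ) (hn : 1 ≤ n) (p s lam Lam : ℝ)
    (hp : 1 < p) (hs0 : 0 < s) (hs1 : s < 1)
    (hlam : 0 < lam) (hlamLam : lam ≤ Lam)
    (Ω : Set (Rn n)) (hΩopen : IsOpen Ω) (hΩconn : IsConnected Ω)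
    (hΩbdd : Bornology.IsBounded Ω) :
    ∃ C C' : ℝ, 0 < C ∧ 0 < C' ∧
      ∀ q : ℝ, (n : ℝ) / (p * s) < q → 1 < (n : ℝ) / (p * s) →
      ∀ V : Rn n → ℝ, IsPotential n p s q V →
      ∀ g : Rn n → ℝ, MemWsp n p s Set.univ g →
      ∀ K : Rn n → ℝ, KernelClass n p s lam Lam K →
      ∀ u : Rn n → ℝ, WeakSupersolution n p s Ω K V g u →
      ∀ (x₀ : Rn n) (R : ℝ), 0 < R → Metric.ball x₀ R ⊆ Ω →
        (∀ x ∈ Metric.ball x₀ R, 0 ≤ u x) →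
      ∀ a b : ℝ, 0 < a → a < 1 → 0 < b → b < 1 →
      let v : Rn n → ℝ := fun x => Real.log ((a + b) / (u x + b))
      (∀ r : ℝ, 0 < r → r < R / 2 →
        (⨍ x in Metric.ball x₀ r, |v x - (⨍ y in Metric.ball x₀ r, v y)| ^ p) ≤
          C * (1 / b ^ (p - 1) * (r / R) ^ (p * s) *
                tail n p s (minusPart u) x₀ R ^ (p - 1) +
              (1 + lqNormOn n q Ω (plusPart V)))) ∧
      (∀ r : ℝ, 0 < r → r < R / 2 →
        (⨍ x in Metric.ball x₀ r, |v x - (⨍ y in Metric.ball x₀ r, v y)|) ≤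
          C' * (1 / b ^ (p - 1) * tail n p s (minusPart u) x₀ R ^ (p - 1) +
              (1 + lqNormOn n q Ω (plusPart V))) ^ (1 / p)) := by
  have hCC : 0 < CC n p s lam Lam (diam Ω) := CC_pos hp hs0 hs1 hlam hlamLam
  refine ⟨CC n p s lam Lam (diam Ω), CC n p s lam Lam (diam Ω) ^ (1 / p), hCC, by positivity, ?_⟩
  intro q hq hq1 V hV g _ K hK u hu x₀ R hR hsub hu0 a b ha _ hb _ v
  refine ⟨fun r hr hrR => main_bd hn hp hs0 hs1 hlam hlamLam hq hq1 ha hb hr hrR hΩopen hΩbdd hV hK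
    hu hsub hu0, fun r hr hrR => ?_⟩
  have h1 := main_bd hn hp hs0 hs1 hlam hlamLam hq hq1 ha hb hr hrR hΩopen hΩbdd hV hK
    hu hsub hu0
  obtain ⟨i1, i2, -⟩ := osc hp hs0 ha hb hr hrR hu.1.1.1 hsub hu0
  have hfin : IsFiniteMeasure (volume.restrict (ball x₀ r)) :=
    ⟨by simpa using measure_ball_lt_top⟩
  have hnz : NeZero (volume.restrict (ball x₀ r)) := ⟨by
    rw [Ne, Measure.restrict_eq_zero]; exact (measure_ball_pos _ _ hr).ne'⟩
  refine (jens (volume.restrict (ball x₀ r)) hp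
    (f := fun x => v x - (⨍ y in ball x₀ r, v y)) (i1.sub (integrable_const _)) i2).trans ?_
  have hps : 0 < p * s := by positivity
  have ht : 0 ≤ tail n p s (minusPart u) x₀ R ^ (p - 1) :=
    Real.rpow_nonneg (tail_nonneg hp hs0 hR) _
  have hN : 0 ≤ lqNormOn n q Ω (plusPart V) := lq_nonneg
  rw [← Real.mul_rpow hCC.le (by positivity)]
  refine Real.rpow_le_rpow ?_ (h1.trans ?_) (by positivity)
  · rw [average_eq, smul_eq_mul]
    exact mul_nonneg (by positivity) (integral_nonneg fun x => by positivity)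
  · have hrr : (r / R) ^ (p * s) ≤ 1 :=
      Real.rpow_le_one (by positivity) (by rw [div_le_one hR]; linarith) hps.le
    have hb1 : 0 ≤ 1 / b ^ (p - 1) := by positivity
    refine mul_le_mul_of_nonneg_left (add_le_add_left ?_ _) hCC.le
    exact mul_le_mul_of_nonneg_right (mul_le_of_le_one_right hb1 hrr) ht
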